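/- arXiv:2211.13918 — 2 statements merged into one kernel-verified Lean document; each statement's English description precedes it below -/
import Mathlib

section
/- Assume 2r < σ² and K < 2L. Then the perpetual value function is given explicitly by V(x) = G(x) for x ∈ (0, K/2] and V(x) = (L^α · K² / 4) · x^{−2r/σ²} for x ∈ (K/2, ∞); moreover the stopping time τ_{K/2} = inf{t ≥ 0 : X^x_t ≤ K/2} is optimal, i.e. V(x) = E[e^{−r·τ_{K/2}} G(X^x_{τ_{K/2}})] for every x > 0. -/
open MeasureTheory ProbabilityTheory Real Set Filter

noncomputable section

/-- Geometric Brownian motion with parameters `r`, `σ`, started at `x`,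
driven by the process `W`: `X^x_t = x · exp((r - σ²/2)t + σ W_t)`. -/
def GBM {Ω : Type} (r σ x : ℝ) (W : ℝ → Ω → ℝ) (t : ℝ) (ω : Ω) : ℝ :=
  x * Real.exp ((r - σ ^ 2 / 2) * t + σ * W t ω)

/-- `W` is a standard Brownian motion with respect to the filtration `F` under the
probability measure `P`: it starts at `0`, has continuous paths, is adapted to `F`,
has Gaussian increments `W t - W s ∼ N(0, t - s)`, and its increments after time `s`
are independent of `F s`. -/
structure IsStdBM {Ω : Type} [mΩ : MeasurableSpace Ω] (P : Measure Ω)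
    (F : Filtration ℝ mΩ) (W : ℝ → Ω → ℝ) : Prop where
  init : ∀ ω, W 0 ω = 0
  cont : ∀ ω, Continuous fun t => W t ω
  adapted : ∀ t : ℝ, Measurable[F t] (W t)
  incr_law : ∀ s t : ℝ, 0 ≤ s → s ≤ t →
      Measure.map (fun ω => W t ω - W s ω) P = gaussianReal 0 (Real.toNNReal (t - s))
  incr_indep : ∀ s t : ℝ, 0 ≤ s → s ≤ t →
      Indep (MeasurableSpace.comap (fun ω => W t ω - W s ω) Real.measurableSpace) (F s) P

/-- An `ℝ≥0∞`-valued random time `τ` is a stopping time for the real-indexed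
filtration `F` if `{τ ≤ t} ∈ F t` for every `t ≥ 0`. -/
def IsStoppingTimeE {Ω : Type} [mΩ : MeasurableSpace Ω] (F : Filtration ℝ mΩ)
    (τ : Ω → ENNReal) : Prop :=
  ∀ t : ℝ, 0 ≤ t → MeasurableSet[F t] {ω | τ ω ≤ ENNReal.ofReal t}

/-- The perpetual Azéma supermartingale function `Z(x) = min{(L/x)^α, 1}`,
with `α = 2r/σ² - 1`. -/
def Zp (r σ L x : ℝ) : ℝ := min ((L / x) ^ (2 * r / σ ^ 2 - 1)) 1

/-- The perpetual gain function `G(x) = (K - x)⁺ · Z(x)`. -/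
def gainP (r σ L K x : ℝ) : ℝ := max (K - x) 0 * Zp r σ L x

/-- The perpetual value function `V(x) = sup_τ E[e^{-rτ} G(X^x_τ)]`, the supremum over
all stopping times, with the convention that the payoff vanishes on `{τ = ∞}`. -/
def valueP {Ω : Type} [mΩ : MeasurableSpace Ω] (P : Measure Ω) (F : Filtration ℝ mΩ)
    (W : ℝ → Ω → ℝ) (r σ L K x : ℝ) : ℝ :=
  ⨆ τ : {τ : Ω → ENNReal // IsStoppingTimeE F τ},
    ∫ ω in {ω | τ.1 ω ≠ ⊤},
      Real.exp (-r * (τ.1 ω).toReal) * gainP r σ L K (GBM r σ x W ((τ.1 ω).toReal) ω) ∂P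

/-- The first passage time `τ_b = inf{t ≥ 0 : X^x_t ≤ b}` of the geometric Brownian
motion `X^x` at or below the level `b`. -/
def hitTime {Ω : Type} (r σ x b : ℝ) (W : ℝ → Ω → ℝ) (ω : Ω) : ℝ :=
  sInf {t : ℝ | 0 ≤ t ∧ GBM r σ x W t ω ≤ b}


set_option linter.unusedSectionVars false

/-- exponential martingale -/
def expM {Ω : Type} (W : ℝ → Ω → ℝ) (θ : ℝ) (t : ℝ) (ω : Ω) : ℝ :=
  Real.exp (θ * W t ω - θ ^ 2 * t / 2)

/-- Filtration restricted to nonnegative times. -/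
def filtNN {Ω : Type} [mΩ : MeasurableSpace Ω] (F : Filtration ℝ mΩ) : Filtration NNReal mΩ where
  seq := fun t => F (t : ℝ)
  mono' := fun _ _ h => F.mono (NNReal.coe_le_coe.2 h)
  le' := fun t => F.le t

section
variable {Ω : Type} [mΩ : MeasurableSpace Ω] {P : Measure Ω} [IsProbabilityMeasure P]
    {F : Filtration ℝ mΩ} {W : ℝ → Ω → ℝ}

lemma incr_integrable (hW : IsStdBM P F W) (θ : ℝ) {s t : ℝ} (hs : 0 ≤ s) (hst : s ≤ t) :
    Integrable (fun ω => Real.exp (θ * (W t ω - W s ω))) P ∧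
    ∫ ω, Real.exp (θ * (W t ω - W s ω)) ∂P = Real.exp (θ ^ 2 * (t - s) / 2) := by
  have hl := hW.incr_law s t hs hst
  have hm := mgf_gaussianReal hl θ
  have hv : ((Real.toNNReal (t - s) : NNReal) : ℝ) = t - s := Real.coe_toNNReal _ (by linarith)
  rw [hv] at hm
  refine ⟨?_, ?_⟩
  · apply mgf_pos_iff.1
    rw [hm]; exact Real.exp_pos _
  · rw [mgf] at hm
    rw [hm]; congr 1; ring

lemma expM_integrable (hW : IsStdBM P F W) (θ : ℝ) {t : ℝ} (ht : 0 ≤ t) :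
    Integrable (expM W θ t) P ∧ ∫ ω, expM W θ t ω ∂P = 1 := by
  obtain ⟨h1, h2⟩ := incr_integrable hW θ le_rfl ht
  have e : expM W θ t = fun ω => Real.exp (θ * (W t ω - W 0 ω)) * Real.exp (-(θ ^ 2 * t / 2)) := by
    funext ω
    rw [expM, hW.init, ← Real.exp_add]; congr 1; ring
  rw [e]
  refine ⟨h1.mul_const _, ?_⟩
  rw [integral_mul_const, h2, ← Real.exp_add]
  simp

lemma expM_martingale (hW : IsStdBM P F W) (θ : ℝ) :
    Martingale (fun t : NNReal => expM W θ t) (filtNN F) P := by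
  have hsm : ∀ t : ℝ, StronglyMeasurable[F t] (expM W θ t) := by
    intro t
    have := hW.adapted t
    apply Measurable.stronglyMeasurable
    unfold expM
    exact Real.measurable_exp.comp ((this.const_mul θ).sub_const _)
  refine ⟨fun t => hsm t, ?_⟩
  intro s t hst
  have hst' : (s : ℝ) ≤ t := NNReal.coe_le_coe.2 hst
  set g : Ω → ℝ := fun ω => Real.exp (θ * (W t ω - W s ω)) with hg
  set c : ℝ := Real.exp (-(θ ^ 2 * ((t : ℝ) - s) / 2)) with hc
  obtain ⟨h1, h2⟩ := incr_integrable hW θ s.2 hst'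
  have e : expM W θ t = (fun ω => c * expM W θ s ω) * g := by
    funext ω
    simp only [Pi.mul_apply, hg, hc, expM, ← Real.exp_add]
    congr 1; ring
  have hind := hW.incr_indep s t s.2 hst'
  have hmeas : Measurable (fun ω => W t ω - W s ω) :=
    ((hW.adapted t).mono (F.le _) le_rfl).sub ((hW.adapted s).mono (F.le _) le_rfl)
  have hgm : StronglyMeasurable[MeasurableSpace.comap (fun ω => W t ω - W s ω)
      Real.measurableSpace] g := by
    apply Measurable.stronglyMeasurable
    exact (Real.measurable_exp.comp (measurable_id.const_mul θ)).comp (comap_measurable _)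
  have hce : P[g | F s] =ᵐ[P] fun _ => P[g] :=
    condExp_indep_eq hmeas.comap_le (F.le _) hgm hind
  have hi : Integrable ((fun ω => c * expM W θ s ω) * g) P := by
    rw [← e]; exact (expM_integrable hW θ t.2).1
  have hpull := condExp_mul_of_stronglyMeasurable_left (m := F s) (μ := P)
    ((hsm s).const_mul c) hi h1
  show P[expM W θ t | F s] =ᵐ[P] expM W θ s
  rw [e]
  refine hpull.trans ?_
  filter_upwards [hce] with ω hω
  simp only [Pi.mul_apply, hω]
  rw [show ∫ x, g x ∂P = _ from h2, hc, mul_right_comm, ← Real.exp_add]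
  simp

lemma expM_cont (hW : IsStdBM P F W) (θ : ℝ) (ω : Ω) : Continuous (fun t => expM W θ t ω) := by
  unfold expM
  have := hW.cont ω
  fun_prop

/-- discretisation of a bounded time -/
def disc (T : NNReal) (n : ℕ) (t : NNReal) : NNReal := min ((⌈t * (n + 1)⌉₊ : NNReal) / (n + 1)) T

lemma disc_tendsto (T t : NNReal) (h : t ≤ T) :
    Tendsto (fun n => disc T n t) atTop (nhds t) := by
  have h1 : Tendsto (fun n : ℕ => (⌈t * (n + 1)⌉₊ : NNReal) / (n + 1)) atTop (nhds t) := by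
    have hu : Tendsto (fun n : ℕ => t + 1 / ((n : NNReal) + 1)) atTop (nhds (t + 0)) := by
      apply tendsto_const_nhds.add
      exact tendsto_one_div_add_atTop_nhds_zero_nat
    rw [add_zero] at hu
    refine tendsto_of_tendsto_of_tendsto_of_le_of_le tendsto_const_nhds hu ?_ ?_
    · intro n
      show t ≤ _
      rw [le_div_iff₀ (by positivity)]
      exact Nat.le_ceil _
    · intro n
      show _ ≤ _
      rw [div_le_iff₀ (by positivity), add_mul, one_div, inv_mul_cancel₀ (by positivity)]
      exact (Nat.ceil_lt_add_one (by positivity)).le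
  have := h1.min (tendsto_const_nhds (x := T))
  rwa [min_eq_left h] at this

lemma disc_stopping (T : NNReal) (n : ℕ) (τ : Ω → NNReal)
    (hst : ∀ t : NNReal, MeasurableSet[F t] {ω | τ ω ≤ t}) :
    IsStoppingTime (filtNN F) (fun ω => ((disc T n (τ ω) : NNReal) : WithTop NNReal)) := by
  intro t
  show MeasurableSet[F t] _
  simp only [WithTop.coe_le_coe]
  by_cases hT : T ≤ t
  · have : {ω | disc T n (τ ω) ≤ t} = Set.univ := by
      ext ω; simp only [mem_ofPred_eq, mem_univ, iff_true]
      exact (min_le_right _ _).trans hT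
    rw [this]; exact MeasurableSet.univ
  · set q : NNReal := (⌊t * (n + 1)⌋₊ : NNReal) / (n + 1) with hq
    have hqt : q ≤ t := by
      rw [hq, div_le_iff₀ (by positivity)]
      exact Nat.floor_le (by positivity)
    have : {ω | disc T n (τ ω) ≤ t} = {ω | τ ω ≤ q} := by
      ext ω
      simp only [mem_ofPred_eq, disc, min_le_iff, hT, or_false]
      rw [div_le_iff₀ (by positivity), hq, le_div_iff₀ (by positivity), ← Nat.ceil_le,
        ← Nat.le_floor_iff (by positivity)]
    rw [this]
    exact F.mono (NNReal.coe_le_coe.2 hqt) _ (hst q)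

lemma opt_stopping (hW : IsStdBM P F W) (θ : ℝ) (T : NNReal) (τ : Ω → NNReal)
    (hτ : ∀ ω, τ ω ≤ T) (hst : ∀ t : NNReal, MeasurableSet[F t] {ω | τ ω ≤ t}) :
    Integrable (fun ω => expM W θ (τ ω) ω) P ∧ ∫ ω, expM W θ (τ ω) ω ∂P = 1 := by
  have hmart := expM_martingale hW θ
  have hS := fun n => disc_stopping (F := F) T n τ hst
  have hle : ∀ n ω, ((disc T n (τ ω) : NNReal) : WithTop NNReal) ≤ T := fun n ω =>
    WithTop.coe_le_coe.2 (min_le_right _ _)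
  have hcount : ∀ n, (Set.range (fun ω => ((disc T n (τ ω) : NNReal) : WithTop NNReal))).Countable := by
    intro n
    refine Set.Countable.mono ?_ (Set.countable_range
      (fun k : ℕ => ((min ((k : NNReal) / (n + 1)) T : NNReal) : WithTop NNReal)))
    rintro _ ⟨ω, rfl⟩
    exact ⟨⌈τ ω * (n + 1)⌉₊, rfl⟩
  have key : ∀ n, (fun ω => expM W θ (disc T n (τ ω)) ω) =ᵐ[P]
      P[expM W θ T | (hS n).measurableSpace] := fun n =>
    hmart.stoppedValue_ae_eq_condExp_of_le_const_of_countable_range (hS n) (hle n) (hcount n)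
  have hTint := expM_integrable hW θ (t := (T : ℝ)) T.2
  have hUI : UniformIntegrable (fun n => fun ω => expM W θ (disc T n (τ ω)) ω) 1 P :=
    (hTint.1.uniformIntegrable_condExp (fun n => (hS n).measurableSpace_le)).ae_eq
      (fun n => (key n).symm)
  have hlim : ∀ᵐ ω ∂P, Tendsto (fun n => expM W θ (disc T n (τ ω)) ω) atTop
      (nhds (expM W θ (τ ω) ω)) := by
    filter_upwards with ω
    have h1 := (NNReal.continuous_coe.tendsto _).comp (disc_tendsto T (τ ω) (hτ ω))
    exact ((expM_cont hW θ ω).tendsto _).comp h1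
  have hIntegr : Integrable (fun ω => expM W θ (τ ω) ω) P := hUI.integrable_of_ae_tendsto hlim
  refine ⟨hIntegr, ?_⟩
  have hL := tendsto_Lp_finite_of_tendsto_ae le_rfl ENNReal.one_ne_top (fun n => hUI.1 n)
    (memLp_one_iff_integrable.2 hIntegr) hUI.2.1 hlim
  have hI := tendsto_integral_of_L1' _ hIntegr.1
    (Eventually.of_forall fun n => memLp_one_iff_integrable.1 (hUI.memLp n)) hL
  refine tendsto_nhds_unique hI ?_
  have : ∀ n, ∫ ω, expM W θ (disc T n (τ ω)) ω ∂P = 1 := by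
    intro n
    rw [integral_congr_ae (key n), integral_condExp (hS n).measurableSpace_le, hTint.2]
  simp only [this]
  exact tendsto_const_nhds

/-- truncated time -/
def trunc (τ : Ω → ENNReal) (n : ℕ) (ω : Ω) : NNReal := (min (τ ω) (n : ENNReal)).toNNReal

lemma trunc_coe (τ : Ω → ENNReal) (n : ℕ) (ω : Ω) :
    ((trunc τ n ω : NNReal) : ENNReal) = min (τ ω) (n : ENNReal) :=
  ENNReal.coe_toNNReal (ne_top_of_le_ne_top (ENNReal.natCast_ne_top n) (min_le_right _ _))

lemma trunc_opt (hW : IsStdBM P F W) (θ : ℝ) (τ : Ω → ENNReal) (hst : IsStoppingTimeE F τ) (n : ℕ) :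
    Integrable (fun ω => expM W θ (trunc τ n ω) ω) P ∧
      ∫ ω, expM W θ (trunc τ n ω) ω ∂P = 1 := by
  refine opt_stopping hW θ n _ ?_ ?_
  · intro ω
    rw [← ENNReal.coe_le_coe, trunc_coe]
    simp
  · intro t
    have : {ω | trunc τ n ω ≤ t} = {ω | τ ω ≤ ENNReal.ofReal t} ∪ {ω | (n : ENNReal) ≤ t} := by
      ext ω
      simp only [mem_ofPred_eq, mem_union]
      rw [← ENNReal.coe_le_coe, trunc_coe, min_le_iff, ENNReal.ofReal_coe_nnreal]
    rw [this]
    exact (hst t t.2).union (MeasurableSet.const _)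

lemma trunc_eventually (τ : Ω → ENNReal) (ω : Ω) (h : τ ω ≠ ⊤) :
    ∀ᶠ n in atTop, ((trunc τ n ω : NNReal) : ℝ) = (τ ω).toReal := by
  obtain ⟨N, hN⟩ := ENNReal.exists_nat_gt h
  filter_upwards [eventually_ge_atTop N] with n hn
  rw [trunc, min_eq_left]
  · rfl
  · exact hN.le.trans (by exact_mod_cast hn)

lemma finite_time_meas (τ : Ω → ENNReal) (hst : IsStoppingTimeE F τ) :
    MeasurableSet {ω | τ ω ≠ ⊤} := by
  have : {ω | τ ω ≠ ⊤} = ⋃ n : ℕ, {ω | τ ω ≤ ENNReal.ofReal n} := by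
    ext ω
    simp only [mem_ofPred_eq, mem_iUnion, ENNReal.ofReal_natCast]
    constructor
    · intro h
      obtain ⟨N, hN⟩ := ENNReal.exists_nat_gt h
      exact ⟨N, hN.le⟩
    · rintro ⟨n, hn⟩
      exact ne_top_of_le_ne_top (ENNReal.natCast_ne_top n) hn
  rw [this]
  exact MeasurableSet.iUnion fun n => F.le _ _ (hst n n.cast_nonneg)

lemma opt_le (hW : IsStdBM P F W) (θ : ℝ) (τ : Ω → ENNReal) (hst : IsStoppingTimeE F τ) :
    IntegrableOn (fun ω => expM W θ (τ ω).toReal ω) {ω | τ ω ≠ ⊤} P ∧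
      ∫ ω in {ω | τ ω ≠ ⊤}, expM W θ (τ ω).toReal ω ∂P ≤ 1 := by
  set S := {ω | τ ω ≠ ⊤} with hS
  have hSm : MeasurableSet S := finite_time_meas τ hst
  have ht := trunc_opt hW θ τ hst
  have hlim : ∀ᵐ ω ∂(P.restrict S), Tendsto (fun n => expM W θ (trunc τ n ω) ω) atTop
      (nhds (expM W θ (τ ω).toReal ω)) := by
    filter_upwards [ae_restrict_mem hSm] with ω hω
    apply tendsto_const_nhds.congr'
    filter_upwards [trunc_eventually τ ω hω] with n hn
    rw [hn]
  have hm : AEStronglyMeasurable (fun ω => expM W θ (τ ω).toReal ω) (P.restrict S) :=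
    aestronglyMeasurable_of_tendsto_ae atTop (fun n => (ht n).1.1.restrict) hlim
  have hl : ∫⁻ ω in S, ENNReal.ofReal (expM W θ (τ ω).toReal ω) ∂P ≤ 1 := by
    calc ∫⁻ ω in S, ENNReal.ofReal (expM W θ (τ ω).toReal ω) ∂P
        = ∫⁻ ω in S, liminf (fun n => ENNReal.ofReal (expM W θ (trunc τ n ω) ω)) atTop ∂P := by
          apply lintegral_congr_ae
          filter_upwards [hlim] with ω hω
          exact ((ENNReal.continuous_ofReal.tendsto _).comp hω).liminf_eq.symm
      _ ≤ liminf (fun n => ∫⁻ ω in S, ENNReal.ofReal (expM W θ (trunc τ n ω) ω) ∂P) atTop := by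
          apply lintegral_liminf_le'
          intro n
          exact (ht n).1.1.restrict.aemeasurable.ennreal_ofReal
      _ ≤ liminf (fun n : ℕ => (1 : ENNReal)) atTop := by
          refine liminf_le_liminf ?_
          · filter_upwards with n
            refine (setLIntegral_le_lintegral _ _).trans ?_
            rw [← ofReal_integral_eq_lintegral_ofReal (ht n).1
              (ae_of_all _ fun ω => (Real.exp_pos _).le), (ht n).2]
            simp
      _ = 1 := by simp
  have hnn : 0 ≤ᵐ[P.restrict S] fun ω => expM W θ (τ ω).toReal ω :=
    ae_of_all _ fun ω => (Real.exp_pos _).le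
  refine ⟨⟨hm, ?_⟩, ?_⟩
  · rw [hasFiniteIntegral_iff_ofReal hnn]
    exact hl.trans_lt ENNReal.one_lt_top
  · rw [integral_eq_lintegral_of_nonneg_ae hnn hm]
    exact ENNReal.toReal_le_of_le_ofReal zero_le_one (by simpa using hl)

end

lemma gbm_pos {Ω : Type} (r σ x : ℝ) (W : ℝ → Ω → ℝ) (t : ℝ) (ω : Ω) (hx : 0 < x) :
    0 < GBM r σ x W t ω := mul_pos hx (Real.exp_pos _)

lemma disc_gbm_one {Ω : Type} (r σ x : ℝ) (W : ℝ → Ω → ℝ) (t : ℝ) (ω : Ω) :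
    Real.exp (-r * t) * GBM r σ x W t ω = x * expM W σ t ω := by
  rw [GBM, expM, mul_left_comm, ← Real.exp_add]
  congr 2; ring

lemma disc_gbm_rpow {Ω : Type} (r σ x : ℝ) (W : ℝ → Ω → ℝ) (t : ℝ) (ω : Ω) (hx : 0 < x)
    (hσ : 0 < σ) :
    Real.exp (-r * t) * (GBM r σ x W t ω) ^ (-(2 * r / σ ^ 2)) =
      x ^ (-(2 * r / σ ^ 2)) * expM W (-(2 * r / σ ^ 2) * σ) t ω := by
  rw [GBM, expM, Real.mul_rpow hx.le (Real.exp_pos _).le, mul_left_comm, ← Real.exp_mul,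
    ← Real.exp_add]
  congr 2
  field_simp
  ring

section
variable {Ω : Type} [mΩ : MeasurableSpace Ω] {P : Measure Ω} [IsProbabilityMeasure P]
    {F : Filtration ℝ mΩ} {W : ℝ → Ω → ℝ}

lemma upper (hW : IsStdBM P F W) (r σ L K x : ℝ) (hσ : 0 < σ) (hL : 0 < L)
    (hx : 0 < x) (a b : ℝ) (ha : 0 ≤ a) (hb : 0 ≤ b)
    (hdom : ∀ y : ℝ, 0 < y → gainP r σ L K y ≤ a * y + b * y ^ (-(2 * r / σ ^ 2)))
    (τ : Ω → ENNReal) (hst : IsStoppingTimeE F τ) :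
    ∫ ω in {ω | τ ω ≠ ⊤},
      Real.exp (-r * (τ ω).toReal) * gainP r σ L K (GBM r σ x W ((τ ω).toReal) ω) ∂P ≤
      a * x + b * x ^ (-(2 * r / σ ^ 2)) := by
  obtain ⟨i1, l1⟩ := opt_le hW σ τ hst
  obtain ⟨i2, l2⟩ := opt_le hW (-(2 * r / σ ^ 2) * σ) τ hst
  have I1 := i1.const_mul (a * x)
  have I2 := i2.const_mul (b * x ^ (-(2 * r / σ ^ 2)))
  have h0 : ∀ y : ℝ, 0 < y → 0 ≤ gainP r σ L K y := by
    intro y hy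
    unfold gainP Zp
    have : 0 < (L / y) ^ (2 * r / σ ^ 2 - 1) := Real.rpow_pos_of_pos (div_pos hL hy) _
    positivity
  have hxp := Real.rpow_pos_of_pos hx (-(2 * r / σ ^ 2))
  refine (integral_mono_of_nonneg ?_ (I1.add I2) ?_).trans ?_
  · exact ae_of_all _ fun ω => mul_nonneg (Real.exp_pos _).le (h0 _ (gbm_pos _ _ _ _ _ _ hx))
  · refine ae_of_all _ fun ω => ?_
    have h1 := disc_gbm_one r σ x W (τ ω).toReal ω
    have h2 := disc_gbm_rpow r σ x W (τ ω).toReal ω hx hσ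
    have h3 := mul_le_mul_of_nonneg_left (hdom _ (gbm_pos r σ x W (τ ω).toReal ω hx))
      (Real.exp_pos (-r * (τ ω).toReal)).le
    simp only [Pi.add_apply]
    refine h3.trans (le_of_eq ?_)
    linear_combination a * h1 + b * h2
  · simp only [Pi.add_apply]
    rw [integral_add I1 I2, integral_const_mul, integral_const_mul]
    have := mul_le_mul_of_nonneg_left l1 (mul_nonneg ha hx.le)
    have := mul_le_mul_of_nonneg_left l2 (mul_nonneg hb hxp.le)
    linarith

lemma value_eq (r σ L K x v : ℝ) (τ : Ω → ENNReal) (hst : IsStoppingTimeE F τ)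
    (hv : ∫ ω in {ω | τ ω ≠ ⊤},
      Real.exp (-r * (τ ω).toReal) * gainP r σ L K (GBM r σ x W ((τ ω).toReal) ω) ∂P = v)
    (hu : ∀ τ : Ω → ENNReal, IsStoppingTimeE F τ → ∫ ω in {ω | τ ω ≠ ⊤},
      Real.exp (-r * (τ ω).toReal) * gainP r σ L K (GBM r σ x W ((τ ω).toReal) ω) ∂P ≤ v) :
    valueP P F W r σ L K x = v := by
  unfold valueP
  have : Nonempty {τ : Ω → ENNReal // IsStoppingTimeE F τ} := ⟨⟨τ, hst⟩⟩
  apply le_antisymm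
  · exact ciSup_le fun t => hu t.1 t.2
  · rw [← hv]
    refine le_ciSup (f := fun τ : {τ : Ω → ENNReal // IsStoppingTimeE F τ} =>
      ∫ ω in {ω | τ.1 ω ≠ ⊤},
      Real.exp (-r * (τ.1 ω).toReal) * gainP r σ L K (GBM r σ x W ((τ.1 ω).toReal) ω) ∂P)
      ⟨v, ?_⟩ ⟨τ, hst⟩
    rintro _ ⟨t, rfl⟩
    exact hu t.1 t.2

/-- the extended hitting time -/
def hitE (r σ x b : ℝ) (W : ℝ → Ω → ℝ) (ω : Ω) : ENNReal :=
  open Classical in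
  if {t : ℝ | 0 ≤ t ∧ GBM r σ x W t ω ≤ b}.Nonempty then ENNReal.ofReal (hitTime r σ x b W ω) else ⊤

lemma gbm_cont (hW : IsStdBM P F W) (r σ x : ℝ) (ω : Ω) :
    Continuous (fun t => GBM r σ x W t ω) := by
  unfold GBM
  have := hW.cont ω
  fun_prop

lemma hit_mem (hW : IsStdBM P F W) (r σ x b : ℝ) (ω : Ω)
    (h : {t : ℝ | 0 ≤ t ∧ GBM r σ x W t ω ≤ b}.Nonempty) :
    0 ≤ hitTime r σ x b W ω ∧ GBM r σ x W (hitTime r σ x b W ω) ω ≤ b := by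
  have hc : IsClosed {t : ℝ | 0 ≤ t ∧ GBM r σ x W t ω ≤ b} :=
    (isClosed_le continuous_const continuous_id).inter
      (isClosed_le (gbm_cont hW r σ x ω) continuous_const)
  exact hc.csInf_mem h ⟨0, fun t ht => ht.1⟩

lemma hit_before (r σ x b : ℝ) (ω : Ω) (t : ℝ) (ht : 0 ≤ t)
    (h : t < hitTime r σ x b W ω) : b < GBM r σ x W t ω := by
  by_contra hc
  push Not at hc
  have : hitTime r σ x b W ω ≤ t := csInf_le ⟨0, fun t ht => ht.1⟩ ⟨ht, hc⟩
  linarith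

lemma hit_eq (hW : IsStdBM P F W) (r σ x b : ℝ) (hxb : b < x) (ω : Ω)
    (h : {t : ℝ | 0 ≤ t ∧ GBM r σ x W t ω ≤ b}.Nonempty) :
    GBM r σ x W (hitTime r σ x b W ω) ω = b := by
  obtain ⟨h0, h1⟩ := hit_mem hW r σ x b ω h
  refine le_antisymm h1 ?_
  by_contra hlt
  push Not at hlt
  have hz : GBM r σ x W 0 ω = x := by simp [GBM, hW.init]
  have hc := (gbm_cont hW r σ x ω).continuousOn (s := Icc 0 (hitTime r σ x b W ω))
  obtain ⟨s, hs, hsb⟩ := intermediate_value_Icc' h0 hc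
    (show b ∈ Icc (GBM r σ x W (hitTime r σ x b W ω) ω) (GBM r σ x W 0 ω) from
      ⟨hlt.le, by rw [hz]; exact hxb.le⟩)
  have hs' : s < hitTime r σ x b W ω := by
    rcases hs.2.lt_or_eq with h | h
    · exact h
    · rw [← h] at hlt; linarith
  have := hit_before r σ x b ω s hs.1 hs'
  simp only at hsb
  linarith

lemma hitE_stopping (hW : IsStdBM P F W) (r σ x b : ℝ) :
    IsStoppingTimeE F (hitE r σ x b W) := by
  intro t ht
  have hm : ∀ s, s ≤ t → Measurable[F t] (GBM r σ x W s) := by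
    intro s hs
    have h1 : Measurable[F t] (W s) := (hW.adapted s).mono (F.mono hs) le_rfl
    unfold GBM
    exact (Real.measurable_exp.comp ((h1.const_mul σ).const_add _)).const_mul x
  have key : {ω | hitE r σ x b W ω ≤ ENNReal.ofReal t} =
      ⋂ n : ℕ, ⋃ q : ℚ, {ω | GBM r σ x W (max 0 (min (q : ℝ) t)) ω < b + 1 / ((n : ℝ) + 1)} := by
    ext ω
    have hcont := gbm_cont hW r σ x ω
    simp only [mem_ofPred_eq, mem_iInter, mem_iUnion]
    constructor
    · intro h n
      have hne : {t : ℝ | 0 ≤ t ∧ GBM r σ x W t ω ≤ b}.Nonempty := by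
        by_contra hc
        simp [hitE, hc] at h
      rw [hitE, if_pos hne, ENNReal.ofReal_le_ofReal_iff ht] at h
      obtain ⟨h0, h1⟩ := hit_mem hW r σ x b ω hne
      set s := hitTime r σ x b W ω
      have hclamp : Continuous fun u : ℝ => GBM r σ x W (max 0 (min u t)) ω :=
        hcont.comp (by fun_prop)
      have hopen : IsOpen {u : ℝ | GBM r σ x W (max 0 (min u t)) ω < b + 1 / ((n : ℝ) + 1)} :=
        isOpen_lt hclamp continuous_const
      have hn : 0 < 1 / ((n : ℝ) + 1) := by positivity
      obtain ⟨q, hq⟩ := Rat.denseRange_cast.exists_mem_open hopen (⟨s, by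
        show GBM r σ x W (max 0 (min s t)) ω < _
        rw [min_eq_left h, max_eq_right h0]; linarith⟩ : Set.Nonempty _)
      exact ⟨q, hq⟩
    · intro h
      obtain ⟨s, hs, hmin⟩ := isCompact_Icc.exists_isMinOn (nonempty_Icc.2 ht)
        (hcont.continuousOn (s := Icc 0 t))
      have hsb : GBM r σ x W s ω ≤ b := by
        refine le_of_forall_pos_lt_add ?_
        intro ε hε
        obtain ⟨n, hn⟩ := exists_nat_one_div_lt hε
        obtain ⟨q, hq⟩ := h n
        have := hmin (show max 0 (min (q : ℝ) t) ∈ Icc 0 t from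
          ⟨le_max_left _ _, max_le ht (min_le_right _ _)⟩)
        simp only [mem_ofPred_eq] at this
        linarith
      have hne : {t : ℝ | 0 ≤ t ∧ GBM r σ x W t ω ≤ b}.Nonempty := ⟨s, hs.1, hsb⟩
      rw [hitE, if_pos hne]
      apply ENNReal.ofReal_le_ofReal
      have hle : hitTime r σ x b W ω ≤ s := csInf_le ⟨0, fun t ht => ht.1⟩ ⟨hs.1, hsb⟩
      exact hle.trans hs.2
  rw [key]
  refine MeasurableSet.iInter fun n => MeasurableSet.iUnion fun q => ?_
  exact hm _ (max_le ht (min_le_right _ _)) measurableSet_Iio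

lemma hit_ae (hW : IsStdBM P F W) (r σ x b : ℝ) (hσ : 0 < σ) (hvol : 2 * r < σ ^ 2)
    (hx : 0 < x) (hb : 0 < b) :
    ∀ᵐ ω ∂P, {t : ℝ | 0 ≤ t ∧ GBM r σ x W t ω ≤ b}.Nonempty := by
  set μ' : ℝ := σ ^ 2 / 2 - r with hμ
  have hμ0 : 0 < μ' := by rw [hμ]; linarith
  set p : ℝ := μ' / σ ^ 2 with hp
  have hp0 : 0 < p := by positivity
  set c : ℝ := μ' ^ 2 / (2 * σ ^ 2) with hc
  have hc0 : 0 < c := by positivity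
  set C : ℝ := Real.exp (p * Real.log (b / x)) with hC
  have hC0 : 0 < C := Real.exp_pos _
  rw [ae_iff]
  set A := {ω | ¬ {t : ℝ | 0 ≤ t ∧ GBM r σ x W t ω ≤ b}.Nonempty} with hA
  have hbound : ∀ n : ℕ, P A ≤ ENNReal.ofReal (Real.exp (-c * n) / C) := by
    intro n
    obtain ⟨hi, hI⟩ := expM_integrable hW (p * σ) (n.cast_nonneg (α := ℝ))
    have hsub : A ⊆ {ω | C * Real.exp (c * n) ≤ expM W (p * σ) n ω} := by
      intro ω hω
      have hgt : b < GBM r σ x W n ω := by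
        by_contra hcon
        push Not at hcon
        exact hω ⟨n, n.cast_nonneg, hcon⟩
      have hlog : Real.log (b / x) < (r - σ ^ 2 / 2) * n + σ * W n ω := by
        rw [Real.log_lt_iff_lt_exp (div_pos hb hx), div_lt_iff₀ hx, mul_comm]
        exact hgt
      show C * Real.exp (c * n) ≤ expM W (p * σ) n ω
      rw [hC, expM, ← Real.exp_add]
      apply Real.exp_le_exp.2
      have h1 := mul_le_mul_of_nonneg_left hlog.le hp0.le
      have h2 : c * n = p * μ' * n - (p * σ) ^ 2 * n / 2 := by
        rw [hc, hp]; field_simp; ring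
      rw [h2]
      have h3 : (r - σ ^ 2 / 2) = -μ' := by rw [hμ]; ring
      rw [h3] at h1
      linarith
    have hmk := mul_meas_ge_le_integral_of_nonneg (f := expM W (p * σ) n)
      (ae_of_all _ fun ω => (Real.exp_pos _).le) hi (C * Real.exp (c * n))
    rw [hI] at hmk
    have hle : P.real {ω | C * Real.exp (c * n) ≤ expM W (p * σ) n ω} ≤ Real.exp (-c * n) / C := by
      rw [le_div_iff₀ hC0]
      have e1 : Real.exp (-c * n) * Real.exp (c * n) = 1 := by
        rw [← Real.exp_add]; simp
      have e2 := Real.exp_pos (-c * n)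
      have := mul_le_mul_of_nonneg_left hmk e2.le
      calc _ = Real.exp (-c * n) * Real.exp (c * n) *
            (P.real {ω | C * Real.exp (c * n) ≤ expM W (p * σ) n ω} * C) := by rw [e1, one_mul]
        _ = Real.exp (-c * n) * (C * Real.exp (c * n) *
          P.real {ω | C * Real.exp (c * n) ≤ expM W (p * σ) n ω}) := by ring
        _ ≤ _ := by linarith
    refine (measure_mono hsub).trans ?_
    rw [← ofReal_measureReal]
    exact ENNReal.ofReal_le_ofReal hle
  have hlim : Tendsto (fun n : ℕ => ENNReal.ofReal (Real.exp (-c * n) / C)) atTop (nhds 0) := by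
    have h1 : Tendsto (fun n : ℕ => -c * (n : ℝ)) atTop atBot :=
      tendsto_natCast_atTop_atTop.const_mul_atTop_of_neg (by linarith)
    have h2 := (Real.tendsto_exp_atBot.comp h1).div_const C
    have h3 := (ENNReal.continuous_ofReal.tendsto _).comp h2
    rw [zero_div, ENNReal.ofReal_zero] at h3
    exact h3
  exact le_antisymm (ge_of_tendsto' hlim hbound) bot_le

lemma hit_laplace (hW : IsStdBM P F W) (r σ x b : ℝ) (hr : 0 < r) (hσ : 0 < σ)
    (hvol : 2 * r < σ ^ 2) (hx : 0 < x) (hb : 0 < b) (hxb : b < x) :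
    ∫ ω, Real.exp (-r * hitTime r σ x b W ω) * b ^ (-(2 * r / σ ^ 2)) ∂P =
      x ^ (-(2 * r / σ ^ 2)) := by
  set γ := 2 * r / σ ^ 2 with hγ
  have hγ0 : 0 < γ := by positivity
  have hae := hit_ae hW r σ x b hσ hvol hx hb
  have ht := trunc_opt hW (-γ * σ) _ (hitE_stopping hW r σ x b)
  set f : ℕ → Ω → ℝ := fun n ω => x ^ (-γ) * expM W (-γ * σ) (trunc (hitE r σ x b W) n ω) ω with hf
  have hfI : ∀ n, ∫ ω, f n ω ∂P = x ^ (-γ) := by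
    intro n
    rw [hf]; simp only
    rw [integral_const_mul, (ht n).2, mul_one]
  have hlim : Tendsto (fun n => ∫ ω, f n ω ∂P) atTop
      (nhds (∫ ω, Real.exp (-r * hitTime r σ x b W ω) * b ^ (-γ) ∂P)) := by
    refine tendsto_integral_of_dominated_convergence (fun _ => b ^ (-γ))
      (fun n => ((ht n).1.const_mul _).1) (integrable_const _) ?_ ?_
    · intro n
      filter_upwards [hae] with ω hω
      have hnn : 0 ≤ f n ω := mul_nonneg (Real.rpow_pos_of_pos hx _).le (Real.exp_pos _).le
      rw [Real.norm_of_nonneg hnn, hf]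
      simp only
      rw [← disc_gbm_rpow r σ x W _ ω hx hσ, ← hγ]
      set s : NNReal := trunc (hitE r σ x b W) n ω with hs
      have hsle : (s : ℝ) ≤ hitTime r σ x b W ω := by
        have h1 : ((s : NNReal) : ENNReal) ≤ hitE r σ x b W ω := by
          rw [hs, trunc_coe]; exact min_le_left _ _
        rw [hitE, if_pos hω, ← ENNReal.ofReal_coe_nnreal,
          ENNReal.ofReal_le_ofReal_iff (hit_mem hW r σ x b ω hω).1] at h1
        exact h1
      have hbs : b ≤ GBM r σ x W s ω := by
        rcases hsle.lt_or_eq with h | h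
        · exact (hit_before r σ x b ω s s.2 h).le
        · rw [h, hit_eq hW r σ x b hxb ω hω]
      have h1 : GBM r σ x W s ω ^ (-γ) ≤ b ^ (-γ) :=
        Real.rpow_le_rpow_of_nonpos hb hbs (by linarith)
      have h2 : Real.exp (-r * (s : ℝ)) ≤ 1 := by
        rw [Real.exp_le_one_iff]
        have := s.coe_nonneg
        nlinarith
      calc _ ≤ 1 * b ^ (-γ) := mul_le_mul h2 h1
            (Real.rpow_pos_of_pos (gbm_pos _ _ _ _ _ _ hx) _).le zero_le_one
        _ = _ := one_mul _
    · filter_upwards [hae] with ω hω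
      apply tendsto_const_nhds.congr'
      have hfin : hitE r σ x b W ω ≠ ⊤ := by
        rw [hitE, if_pos hω]; exact ENNReal.ofReal_ne_top
      filter_upwards [trunc_eventually _ ω hfin] with n hn
      rw [hf]; simp only
      rw [hn, ← disc_gbm_rpow r σ x W _ ω hx hσ, ← hγ, hitE, if_pos hω,
        ENNReal.toReal_ofReal (hit_mem hW r σ x b ω hω).1, hit_eq hW r σ x b hxb ω hω]
  simp only [hfI] at hlim
  exact tendsto_nhds_unique hlim tendsto_const_nhds

end

lemma gain_le (r σ L K y : ℝ) (hL : 0 < L) (hy : 0 < y) (B : ℝ)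
    (hB : (K - y) * y ≤ B) (hB0 : 0 ≤ B) :
    gainP r σ L K y ≤ L ^ (2 * r / σ ^ 2 - 1) * (B * y ^ (-(2 * r / σ ^ 2))) := by
  have hZ : Zp r σ L y ≤ L ^ (2 * r / σ ^ 2 - 1) * (y * y ^ (-(2 * r / σ ^ 2))) := by
    refine (min_le_left _ _).trans (le_of_eq ?_)
    rw [Real.div_rpow hL.le hy.le, div_eq_mul_inv, ← Real.rpow_neg hy.le]
    congr 1
    rw [show -(2 * r / σ ^ 2 - 1) = 1 + -(2 * r / σ ^ 2) by ring, Real.rpow_add hy, Real.rpow_one]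
  have h1 := Real.rpow_pos_of_pos hL (2 * r / σ ^ 2 - 1)
  have h2 := Real.rpow_pos_of_pos hy (-(2 * r / σ ^ 2))
  unfold gainP
  calc _ ≤ max (K - y) 0 * (L ^ (2 * r / σ ^ 2 - 1) * (y * y ^ (-(2 * r / σ ^ 2)))) :=
        mul_le_mul_of_nonneg_left hZ (le_max_right _ _)
    _ = L ^ (2 * r / σ ^ 2 - 1) * ((max (K - y) 0 * y) * y ^ (-(2 * r / σ ^ 2))) := by ring
    _ ≤ _ := by
        gcongr
        rcases le_total (K - y) 0 with h | h
        · rw [max_eq_right h]; simpa using hB0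
        · rw [max_eq_left h]; exact hB

lemma gain_eq (r σ L K y : ℝ) (hL : 0 < L) (hσ : 0 < σ) (hvol : 2 * r < σ ^ 2)
    (hy : 0 < y) (hyL : y ≤ L) (hyK : y ≤ K) :
    gainP r σ L K y = L ^ (2 * r / σ ^ 2 - 1) * ((K - y) * y * y ^ (-(2 * r / σ ^ 2))) := by
  have hZ : Zp r σ L y = L ^ (2 * r / σ ^ 2 - 1) * (y * y ^ (-(2 * r / σ ^ 2))) := by
    unfold Zp
    rw [min_eq_left]
    · rw [Real.div_rpow hL.le hy.le, div_eq_mul_inv, ← Real.rpow_neg hy.le]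
      congr 1
      rw [show -(2 * r / σ ^ 2 - 1) = 1 + -(2 * r / σ ^ 2) by ring, Real.rpow_add hy, Real.rpow_one]
    · apply Real.rpow_le_one_of_one_le_of_nonpos
      · rwa [one_le_div hy]
      · have : 2 * r / σ ^ 2 < 1 := by rw [div_lt_one (by positivity)]; exact hvol
        linarith
  unfold gainP
  rw [hZ, max_eq_left (by linarith)]
  ring

lemma tangent (K γ x y : ℝ) (hγ : 0 < γ) (hx : 0 < x) (hxK : x ≤ K / 2) (hy : 0 < y) :
    (K - y) * y ≤ (K - 2 * x) / (1 + γ) * x ^ (-γ) * y ^ (1 + γ) +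
      x * (γ * K + (1 - γ) * x) / (1 + γ) := by
  have hu : -1 ≤ y / x - 1 := by
    have := div_pos hy hx
    linarith
  have hB := one_add_mul_self_le_rpow_one_add hu (show 1 ≤ 1 + γ by linarith)
  rw [add_sub_cancel] at hB
  have e : x ^ (-γ) * y ^ (1 + γ) = x * (y / x) ^ (1 + γ) := by
    rw [Real.div_rpow hy.le hx.le, Real.rpow_neg hx.le, Real.rpow_add hx, Real.rpow_one]
    have := (Real.rpow_pos_of_pos hx γ).ne'
    field_simp
  rw [mul_assoc, e]
  have hc : 0 ≤ (K - 2 * x) / (1 + γ) * x := by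
    have : 0 ≤ K - 2 * x := by linarith
    positivity
  have h1 := mul_le_mul_of_nonneg_left hB hc
  have h2 : (K - 2 * x) / (1 + γ) * x * (1 + (1 + γ) * (y / x - 1)) +
      x * (γ * K + (1 - γ) * x) / (1 + γ) = (K - y) * y + (y - x) ^ 2 := by
    field_simp
    ring
  nlinarith [sq_nonneg (y - x)]

/-- Assume `2r < σ²` and `K < 2L`. Then the perpetual value function is
given explicitly by `V(x) = G(x)` for `x ∈ (0, K/2]` and
`V(x) = (L^α · K² / 4) · x^{−2r/σ²}` for `x ∈ (K/2, ∞)`; moreover the stopping time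
`τ_{K/2} = inf{t ≥ 0 : X^x_t ≤ K/2}` is optimal, i.e.
`V(x) = E[e^{−r·τ_{K/2}} G(X^x_{τ_{K/2}})]` for every `x > 0`. -/
theorem stmt_4 {Ω : Type} [mΩ : MeasurableSpace Ω] (P : Measure Ω) [IsProbabilityMeasure P]
    (F : Filtration ℝ mΩ) (W : ℝ → Ω → ℝ) (hW : IsStdBM P F W)
    (r σ L K : ℝ) (hr : 0 < r) (hσ : 0 < σ) (hL : 0 < L) (hLK : L < K)
    (hvol : 2 * r < σ ^ 2) (hK2L : K < 2 * L) :
    (∀ x ∈ Ioc (0 : ℝ) (K / 2), valueP P F W r σ L K x = gainP r σ L K x) ∧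
    (∀ x ∈ Ioi (K / 2),
      valueP P F W r σ L K x =
        L ^ (2 * r / σ ^ 2 - 1) * K ^ 2 / 4 * x ^ (-(2 * r) / σ ^ 2)) ∧
    (∀ x : ℝ, 0 < x →
      valueP P F W r σ L K x =
        ∫ ω, Real.exp (-r * hitTime r σ x (K / 2) W ω) *
          gainP r σ L K (GBM r σ x W (hitTime r σ x (K / 2) W ω) ω) ∂P) := by
  set γ := 2 * r / σ ^ 2 with hγ
  have hγ0 : 0 < γ := by positivity
  have hγ1 : γ < 1 := by rw [hγ, div_lt_one (by positivity)]; exact hvol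
  have hK : 0 < K := hL.trans hLK
  have hLα : 0 < L ^ (γ - 1) := Real.rpow_pos_of_pos hL _
  have hA : ∀ x ∈ Ioc (0 : ℝ) (K / 2), valueP P F W r σ L K x = gainP r σ L K x := by
    rintro x ⟨hx, hxK⟩
    have h0 : IsStoppingTimeE F (fun _ : Ω => (0 : ENNReal)) := by
      intro t ht
      simp
    refine value_eq r σ L K x _ _ h0 ?_ ?_
    · simp [GBM, hW.init]
    · intro τ hτ
      have hK2 : 0 ≤ K - 2 * x := by linarith
      have hg1 : 0 ≤ 1 - γ := by linarith
      have hxp := Real.rpow_pos_of_pos hx (-γ)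
      refine (upper hW r σ L K x hσ hL hx
        (L ^ (γ - 1) * ((K - 2 * x) / (1 + γ) * x ^ (-γ)))
        (L ^ (γ - 1) * (x * (γ * K + (1 - γ) * x) / (1 + γ))) (by positivity) (by positivity)
        ?_ τ hτ).trans (le_of_eq ?_)
      · intro y hy
        have hyp := Real.rpow_pos_of_pos hy (1 + γ)
        refine (gain_le r σ L K y hL hy _ (tangent K γ x y hγ0 hx hxK hy) (by positivity)).trans
          (le_of_eq ?_)
        rw [← hγ]
        have e : y ^ (1 + γ) * y ^ (-γ) = y := by
          rw [← Real.rpow_add hy]; simp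
        linear_combination (L ^ (γ - 1) * ((K - 2 * x) / (1 + γ) * x ^ (-γ))) * e
      · rw [gain_eq r σ L K x hL hσ hvol hx (by linarith) (by linarith), ← hγ]
        field_simp
        ring
  have hB : ∀ x ∈ Ioi (K / 2),
      (∫ ω, Real.exp (-r * hitTime r σ x (K / 2) W ω) *
          gainP r σ L K (GBM r σ x W (hitTime r σ x (K / 2) W ω) ω) ∂P =
        L ^ (γ - 1) * K ^ 2 / 4 * x ^ (-(2 * r) / σ ^ 2)) ∧
      valueP P F W r σ L K x =
        L ^ (γ - 1) * K ^ 2 / 4 * x ^ (-(2 * r) / σ ^ 2) := by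
    intro x hxK
    have hxK' : K / 2 < x := hxK
    have hb : 0 < K / 2 := by positivity
    have hx : 0 < x := hb.trans hxK'
    have hexp : -(2 * r) / σ ^ 2 = -γ := by rw [hγ, neg_div]
    rw [hexp]
    have hae := hit_ae hW r σ x (K / 2) hσ hvol hx hb
    have hlap := hit_laplace hW r σ x (K / 2) hr hσ hvol hx hb hxK'
    rw [← hγ] at hlap
    have hI : ∫ ω, Real.exp (-r * hitTime r σ x (K / 2) W ω) *
          gainP r σ L K (GBM r σ x W (hitTime r σ x (K / 2) W ω) ω) ∂P =
        L ^ (γ - 1) * K ^ 2 / 4 * x ^ (-γ) := by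
      rw [← hlap, ← integral_const_mul]
      apply integral_congr_ae
      filter_upwards [hae] with ω hω
      rw [hit_eq hW r σ x (K / 2) hxK' ω hω,
        gain_eq r σ L K (K / 2) hL hσ hvol hb (by linarith) (by linarith), ← hγ]
      ring
    refine ⟨hI, ?_⟩
    refine value_eq r σ L K x _ _ (hitE_stopping hW r σ x (K / 2)) ?_ ?_
    · rw [← hI]
      have hfull : {ω | hitE r σ x (K / 2) W ω ≠ ⊤} =ᵐ[P] Set.univ := by
        rw [eventuallyEq_univ]
        filter_upwards [hae] with ω hω
        show hitE r σ x (K / 2) W ω ≠ ⊤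
        rw [hitE, if_pos hω]
        exact ENNReal.ofReal_ne_top
      rw [setIntegral_congr_set hfull, setIntegral_univ]
      apply integral_congr_ae
      filter_upwards [hae] with ω hω
      rw [hitE, if_pos hω, ENNReal.toReal_ofReal (hit_mem hW r σ x (K / 2) ω hω).1]
    · intro τ hτ
      refine (upper hW r σ L K x hσ hL hx 0 (L ^ (γ - 1) * K ^ 2 / 4) le_rfl (by positivity)
        ?_ τ hτ).trans (le_of_eq ?_)
      · intro y hy
        refine (gain_le r σ L K y hL hy (K ^ 2 / 4) (by nlinarith [sq_nonneg (y - K / 2)])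
          (by positivity)).trans (le_of_eq ?_)
        rw [← hγ]
        ring
      · rw [← hγ]; ring
  refine ⟨hA, fun x hx => (hB x hx).2, ?_⟩
  intro x hx
  rcases le_or_gt x (K / 2) with h | h
  · rw [hA x ⟨hx, h⟩]
    have hz : ∀ ω, hitTime r σ x (K / 2) W ω = 0 := by
      intro ω
      refine IsLeast.csInf_eq ⟨⟨le_rfl, ?_⟩, fun t ht => ht.1⟩
      simpa [GBM, hW.init] using h
    simp [hz, GBM, hW.init]
  · rw [(hB x h).2, (hB x h).1]

end
end

section
/- For every t ∈ [0, T) and every x > 0, almost surely P(max_{t ≤ u ≤ T} X^x_u ≥ L | F_t) = Z(t, X^x_t); in particular the Azéma supermartingale of the last exit time θ = sup{t ∈ [0,T] : X^x_t ≥ L} equals Z(t, X^x_t). -/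
open MeasureTheory ProbabilityTheory Real Set Filter

noncomputable section

/-- The standard normal cumulative distribution function `Φ`. -/
def stdCDF (y : ℝ) : ℝ := ∫ z in Iic y, Real.exp (-z ^ 2 / 2) / Real.sqrt (2 * π)

/-- The finite-horizon Azéma supermartingale function `Z(t,x)` (with `α = 2r/σ² - 1`):
for `t < T`, `Z(t,x) = min{Φ(d₁) + (L/x)^α Φ(d₂), 1}`, and at `t = T` it is `1` for
`x ≥ L` and `0` for `x < L`. -/
def Zt (r σ L T t x : ℝ) : ℝ :=
  if t < T then
    min (stdCDF ((-Real.log (L / x) + (r - σ ^ 2 / 2) * (T - t)) / (σ * Real.sqrt (T - t))) +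
        (L / x) ^ (2 * r / σ ^ 2 - 1) *
          stdCDF ((-Real.log (L / x) - (r - σ ^ 2 / 2) * (T - t)) / (σ * Real.sqrt (T - t)))) 1
  else if L ≤ x then 1 else 0

/-- The finite-horizon gain function `G(t,x) = (K - x)⁺ · Z(t,x)`. -/
def gainT (r σ L K T t x : ℝ) : ℝ := max (K - x) 0 * Zt r σ L T t x


lemma stdCDF_eq_real (y : ℝ) : stdCDF y = (gaussianReal 0 1).real (Iic y) := by
  rw [measureReal_def, gaussianReal_apply_eq_integral 0 (one_ne_zero) (Iic y),
    ENNReal.toReal_ofReal (integral_nonneg fun z => gaussianPDFReal_nonneg _ _ _)]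
  unfold stdCDF
  congr 1
  ext z
  simp [gaussianPDFReal]
  ring

lemma stdCDF_nonneg (y : ℝ) : 0 ≤ stdCDF y := by
  rw [stdCDF_eq_real]; exact measureReal_nonneg

lemma stdCDF_le_one (y : ℝ) : stdCDF y ≤ 1 := by
  rw [stdCDF_eq_real]; exact measureReal_le_one

lemma integrable_stdDensity :
    Integrable (fun z : ℝ => Real.exp (-z ^ 2 / 2) / Real.sqrt (2 * π)) := by
  have := integrable_gaussianPDFReal 0 1
  refine this.congr (ae_of_all _ fun z => ?_)
  simp [gaussianPDFReal]
  ring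

lemma stdCDF_continuous : Continuous stdCDF := by
  have h : stdCDF = fun y => stdCDF 0 +
      ∫ z in (0 : ℝ)..y, Real.exp (-z ^ 2 / 2) / Real.sqrt (2 * π) := by
    ext y
    unfold stdCDF
    rw [← intervalIntegral.integral_Iic_sub_Iic integrable_stdDensity.integrableOn
      integrable_stdDensity.integrableOn]
    ring
  rw [h]
  exact continuous_const.add (intervalIntegral.continuous_primitive
    (fun a b => integrable_stdDensity.intervalIntegrable) 0)

lemma stdCDF_eq_Ici (y : ℝ) : stdCDF y = (gaussianReal 0 1).real (Ici (-y)) := by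
  rw [stdCDF_eq_real]
  have h : (gaussianReal 0 1).map (fun x : ℝ => -x) = gaussianReal 0 1 := by
    rw [gaussianReal_map_neg]; simp
  conv_rhs => rw [← h]
  rw [map_measureReal_apply (by fun_prop) measurableSet_Ici]
  congr 1
  ext z; simp

lemma stdCDF_add_neg (y : ℝ) : stdCDF y + stdCDF (-y) = 1 := by
  have : NullSingletonClass (gaussianReal 0 1) := nullSingletonClass_gaussianReal one_ne_zero
  rw [stdCDF_eq_Ici (-y), stdCDF_eq_real y, neg_neg,
    ← measureReal_congr (Ioi_ae_eq_Ici (μ := gaussianReal 0 1) (a := y)), ← compl_Iic]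
  exact probReal_add_probReal_compl measurableSet_Iic

lemma stdCDF_key (p q : ℝ) (hp : 0 ≤ p) :
    stdCDF (-p - q) ≤ Real.exp (-(2 * p * q)) * stdCDF (p - q) := by
  unfold stdCDF
  rw [← integral_const_mul, ← integral_indicator measurableSet_Iic,
    ← integral_indicator measurableSet_Iic, ← integral_sub_right_eq_self _ (2 * p)]
  refine integral_mono ?_ ?_ ?_
  · exact (integrable_stdDensity.indicator measurableSet_Iic).comp_sub_right (2 * p)
  · exact (integrable_stdDensity.const_mul _).indicator measurableSet_Iic
  · intro w
    simp only [indicator, mem_Iic]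
    by_cases hw : w ≤ p - q
    · rw [if_pos (by linarith), if_pos hw, ← mul_div_assoc, ← Real.exp_add]
      gcongr
      nlinarith
    · rw [if_neg (by linarith), if_neg hw]

/-- The first-passage function. -/
def hh (μ σ τ y : ℝ) : ℝ :=
  stdCDF ((y + μ * τ) / (σ * Real.sqrt τ)) +
    Real.exp (-(2 * μ / σ ^ 2) * y) * stdCDF ((y - μ * τ) / (σ * Real.sqrt τ))

/-- The terminal payoff. -/
def gg (α z : ℝ) : ℝ := if 0 ≤ z then 1 + Real.exp (-α * z) else 0

lemma hh_nonneg (μ σ τ y : ℝ) : 0 ≤ hh μ σ τ y :=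
  add_nonneg (stdCDF_nonneg _) (mul_nonneg (Real.exp_pos _).le (stdCDF_nonneg _))

lemma hh_le (μ σ τ y : ℝ) : hh μ σ τ y ≤ 1 + Real.exp (-(2 * μ / σ ^ 2) * y) :=
  add_le_add (stdCDF_le_one _) (mul_le_of_le_one_right (Real.exp_pos _).le (stdCDF_le_one _))

lemma hh_zero (μ σ τ : ℝ) : hh μ σ τ 0 = 1 := by
  unfold hh
  have := stdCDF_add_neg ((0 + μ * τ) / (σ * Real.sqrt τ))
  rw [← neg_div, show -(0 + μ * τ) = 0 - μ * τ by ring] at this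
  simpa using this

lemma hh_cont (μ σ : ℝ) (hσ : 0 < σ) :
    ContinuousOn (fun p : ℝ × ℝ => hh μ σ p.1 p.2) {p | 0 < p.1} := by
  unfold hh
  have h : ∀ p ∈ {p : ℝ × ℝ | 0 < p.1}, σ * Real.sqrt p.1 ≠ 0 := fun p hp =>
    (mul_pos hσ (Real.sqrt_pos.2 hp)).ne'
  refine ContinuousOn.add ?_ (ContinuousOn.mul (by fun_prop) ?_)
  · exact stdCDF_continuous.comp_continuousOn (ContinuousOn.div (by fun_prop) (by fun_prop) h)
  · exact stdCDF_continuous.comp_continuousOn (ContinuousOn.div (by fun_prop) (by fun_prop) h)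

lemma hh_cont_snd (μ σ τ : ℝ) : Continuous (fun y => hh μ σ τ y) := by
  unfold hh
  refine Continuous.add ?_ (Continuous.mul (by fun_prop) ?_)
  · exact stdCDF_continuous.comp (by fun_prop)
  · exact stdCDF_continuous.comp (by fun_prop)

lemma hh_aux (μ σ τ y : ℝ) (hσ : 0 < σ) (hτ : 0 < τ) :
    -(2 * μ / σ ^ 2) * y = -(2 * (y / (σ * Real.sqrt τ)) * (μ * τ / (σ * Real.sqrt τ))) := by
  have h := Real.sq_sqrt hτ.le
  have h0 := Real.sqrt_pos.2 hτ
  field_simp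
  rw [h]

lemma hh_ge_one (μ σ τ y : ℝ) (hσ : 0 < σ) (hτ : 0 < τ) (hy : 0 ≤ y) : 1 ≤ hh μ σ τ y := by
  have h0 := mul_pos hσ (Real.sqrt_pos.2 hτ)
  have h := stdCDF_key (y / (σ * Real.sqrt τ)) (μ * τ / (σ * Real.sqrt τ)) (by positivity)
  rw [← hh_aux μ σ τ y hσ hτ, ← sub_div] at h
  have h2 := stdCDF_add_neg ((y + μ * τ) / (σ * Real.sqrt τ))
  rw [show -((y + μ * τ) / (σ * Real.sqrt τ)) =
    -(y / (σ * Real.sqrt τ)) - μ * τ / (σ * Real.sqrt τ) by ring] at h2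
  unfold hh
  linarith

lemma hh_le_one (μ σ τ y : ℝ) (hσ : 0 < σ) (hτ : 0 < τ) (hy : y ≤ 0) : hh μ σ τ y ≤ 1 := by
  have h0 := mul_pos hσ (Real.sqrt_pos.2 hτ)
  have h := stdCDF_key (-y / (σ * Real.sqrt τ)) (μ * τ / (σ * Real.sqrt τ))
    (div_nonneg (by linarith) h0.le)
  rw [← hh_aux μ σ τ (-y) hσ hτ] at h
  have h2 := stdCDF_add_neg ((y + μ * τ) / (σ * Real.sqrt τ))
  rw [show -((y + μ * τ) / (σ * Real.sqrt τ)) =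
    (-y / (σ * Real.sqrt τ)) - μ * τ / (σ * Real.sqrt τ) by ring] at h2
  rw [show -(-y / (σ * Real.sqrt τ)) - μ * τ / (σ * Real.sqrt τ) =
    (y - μ * τ) / (σ * Real.sqrt τ) by ring] at h
  have h3 : Real.exp (-(2 * μ / σ ^ 2) * y) * Real.exp (-(2 * μ / σ ^ 2) * -y) = 1 := by
    rw [← Real.exp_add]; simp
  have h4 := mul_le_mul_of_nonneg_left h (Real.exp_pos (-(2 * μ / σ ^ 2) * y)).le
  rw [← mul_assoc, h3, one_mul] at h4
  unfold hh
  linarith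

lemma gg_measurable (α : ℝ) : Measurable (gg α) := by
  unfold gg
  exact Measurable.ite measurableSet_Ici (by fun_prop) measurable_const

lemma gg_nonneg (α z : ℝ) : 0 ≤ gg α z := by
  unfold gg; split_ifs <;> positivity

lemma gg_le (α z : ℝ) : gg α z ≤ 1 + Real.exp (-α * z) := by
  unfold gg; split_ifs
  · exact le_rfl
  · positivity

lemma gg_integrable (α m : ℝ) (v : NNReal) : Integrable (gg α) (gaussianReal m v) := by
  refine Integrable.mono' ((integrable_const 1).add (integrable_exp_mul_gaussianReal (-α)))
    (gg_measurable α).aestronglyMeasurable (ae_of_all _ fun z => ?_)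
  rw [Real.norm_of_nonneg (gg_nonneg _ _)]
  exact gg_le α z

lemma gaussian_Ici (m : ℝ) (s : ℝ) (hs : 0 < s) :
    (gaussianReal m (Real.toNNReal (s ^ 2))).real (Ici 0) = stdCDF (m / s) := by
  have h : (gaussianReal 0 1).map (fun z : ℝ => m - s * z) =
      gaussianReal m (Real.toNNReal (s ^ 2)) := by
    have : (fun z : ℝ => m - s * z) = (fun z => m - z) ∘ (fun z => s * z) := rfl
    rw [this, ← Measure.map_map (by fun_prop) (by fun_prop), gaussianReal_map_const_mul,
      gaussianReal_map_const_sub]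
    congr 1
    · simp
    · ext; simp [sq_nonneg]
  rw [← h, map_measureReal_apply (by fun_prop) measurableSet_Ici, stdCDF_eq_real]
  congr 1
  ext z
  simp only [mem_preimage, mem_Ici, mem_Iic]
  rw [le_div_iff₀ hs]
  constructor <;> intro h <;> linarith

lemma gg_integral (α m s : ℝ) (hs : 0 < s) :
    ∫ z, gg α z ∂(gaussianReal m (Real.toNNReal (s ^ 2))) =
      stdCDF (m / s) + Real.exp (-α * m + α ^ 2 * s ^ 2 / 2) * stdCDF ((m - α * s ^ 2) / s) := by
  have hv : Real.toNNReal (s ^ 2) ≠ 0 := by simp; positivity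
  rw [← gaussian_Ici m s hs, ← gaussian_Ici _ s hs]
  have e1 : ∀ m' : ℝ, (gaussianReal m' (Real.toNNReal (s ^ 2))).real (Ici 0) =
      ∫ z in Ici (0 : ℝ), gaussianPDFReal m' (Real.toNNReal (s ^ 2)) z := by
    intro m'
    rw [measureReal_def, gaussianReal_apply_eq_integral _ hv,
      ENNReal.toReal_ofReal (integral_nonneg fun z => gaussianPDFReal_nonneg _ _ _)]
  rw [e1, e1, integral_gaussianReal_eq_integral_smul hv, ← integral_const_mul, ← integral_add
    (integrable_gaussianPDFReal _ _).integrableOn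
    ((integrable_gaussianPDFReal _ _).integrableOn.const_mul _),
    ← integral_indicator measurableSet_Ici]
  congr 1
  ext z
  simp only [indicator, mem_Ici, gg, smul_eq_mul]
  split_ifs with hz
  · rw [mul_add, mul_one]
    congr 1
    simp only [gaussianPDFReal]
    rw [mul_left_comm, mul_assoc, ← Real.exp_add, ← Real.exp_add]
    congr 2
    rw [Real.coe_toNNReal _ (sq_nonneg s)]
    field_simp
    ring
  · simp

lemma gg_step (μ σ τ y : ℝ) (hσ : 0 < σ) (hτ : 0 < τ) :
    ∫ z, gg (2 * μ / σ ^ 2) (y + μ * τ + σ * z) ∂(gaussianReal 0 (Real.toNNReal τ)) =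
      hh μ σ τ y := by
  have hm : (gaussianReal 0 (Real.toNNReal τ)).map (fun z => y + μ * τ + σ * z) =
      gaussianReal (y + μ * τ) (Real.toNNReal ((σ * Real.sqrt τ) ^ 2)) := by
    have : (fun z : ℝ => y + μ * τ + σ * z) = (fun z => y + μ * τ + z) ∘ (fun z => σ * z) := rfl
    rw [this, ← Measure.map_map (by fun_prop) (by fun_prop), gaussianReal_map_const_mul,
      gaussianReal_map_const_add]
    congr 1
    · simp
    · ext
      simp only [NNReal.coe_mul, NNReal.coe_mk]
      rw [Real.coe_toNNReal _ hτ.le, Real.coe_toNNReal _ (sq_nonneg _), mul_pow,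
        Real.sq_sqrt hτ.le]
  have h2 := integral_map (μ := gaussianReal 0 (Real.toNNReal τ))
    (φ := fun z => y + μ * τ + σ * z) (by fun_prop)
    (gg_measurable (2 * μ / σ ^ 2)).aestronglyMeasurable
  rw [← h2, hm, gg_integral _ _ _ (mul_pos hσ (Real.sqrt_pos.2 hτ))]
  unfold hh
  rw [mul_pow, Real.sq_sqrt hτ.le]
  congr 3
  · field_simp
    ring
  · field_simp
    ring

/-- Log-distance process. -/
def VV {Ω : Type} (a μ σ : ℝ) (W : ℝ → Ω → ℝ) (u : ℝ) (ω : Ω) : ℝ := a + μ * u + σ * W u ω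

section prob
variable {Ω : Type} [mΩ : MeasurableSpace Ω] {P : Measure Ω} [IsProbabilityMeasure P]
    {F : Filtration ℝ mΩ} {W : ℝ → Ω → ℝ}

lemma VV_meas (hW : IsStdBM P F W) (a μ σ u : ℝ) : Measurable[F u] (VV a μ σ W u) := by
  have := hW.adapted u
  unfold VV
  exact (this.const_mul σ).const_add (a + μ * u)

lemma VV_meas' (hW : IsStdBM P F W) (a μ σ u : ℝ) : Measurable (VV a μ σ W u) :=
  (VV_meas hW a μ σ u).mono (F.le u) le_rfl

lemma VV_cont (hW : IsStdBM P F W) (a μ σ : ℝ) (ω : Ω) : Continuous fun u => VV a μ σ W u ω := by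
  have := hW.cont ω
  unfold VV
  fun_prop

lemma W_law (hW : IsStdBM P F W) (T : ℝ) (hT : 0 ≤ T) :
    Measure.map (W T) P = gaussianReal 0 (Real.toNNReal T) := by
  have := hW.incr_law 0 T le_rfl hT
  simpa [hW.init] using this

lemma VV_integrable (hW : IsStdBM P F W) (a μ σ T α : ℝ) (hT : 0 ≤ T) :
    Integrable (fun ω => gg α (VV a μ σ W T ω)) P := by
  have hWm : Measurable (W T) := (hW.adapted T).mono (F.le T) le_rfl
  have h1 : Integrable (fun ω => Real.exp (-α * σ * W T ω)) P := by
    have := integrable_exp_mul_gaussianReal (μ := 0) (v := Real.toNNReal T) (-α * σ)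
    rw [← W_law hW T hT] at this
    exact (integrable_map_measure (by fun_prop) hWm.aemeasurable).1 this
  refine Integrable.mono' ((integrable_const 1).add (h1.const_mul (Real.exp (-α * (a + μ * T)))))
    ((gg_measurable α).comp (VV_meas' hW a μ σ T)).aestronglyMeasurable (ae_of_all _ fun ω => ?_)
  rw [Real.norm_of_nonneg (gg_nonneg _ _)]
  refine (gg_le α _).trans (le_of_eq ?_)
  simp only [Pi.add_apply, VV]
  rw [← Real.exp_add]
  congr 2
  ring

lemma VV_ne_zero (hW : IsStdBM P F W) (a μ σ T : ℝ) (hσ : 0 < σ) (hT : 0 < T) :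
    ∀ᵐ ω ∂P, VV a μ σ W T ω ≠ 0 := by
  have hWm : Measurable (W T) := (hW.adapted T).mono (F.le T) le_rfl
  have hn : NullSingletonClass (gaussianReal 0 (Real.toNNReal T)) :=
    nullSingletonClass_gaussianReal (by simpa using hT)
  have h0 : gaussianReal 0 (Real.toNNReal T) {-(a + μ * T) / σ} = 0 := measure_singleton _
  rw [← W_law hW T hT.le, Measure.map_apply hWm (measurableSet_singleton _)] at h0
  rw [ae_iff]
  convert h0 using 2
  ext ω
  simp only [VV, ne_eq, not_not, mem_setOf_eq, mem_preimage, mem_singleton_iff]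
  rw [eq_div_iff hσ.ne']
  constructor <;> intro h <;> linarith

lemma VV_step (hW : IsStdBM P F W) (a μ σ s T : ℝ) (hσ : 0 < σ) (hs : 0 ≤ s) (hsT : s < T)
    (C : Set Ω) (hC : MeasurableSet[F s] C) :
    ∫ ω in C, gg (2 * μ / σ ^ 2) (VV a μ σ W T ω) ∂P = ∫ ω in C, hh μ σ (T - s) (VV a μ σ W s ω) ∂P := by
  have hC' : MeasurableSet C := F.le s _ hC
  have hWT : Measurable (W T) := (hW.adapted T).mono (F.le T) le_rfl
  have hWs : Measurable (W s) := (hW.adapted s).mono (F.le s) le_rfl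
  let Y : Ω → ℝ × ℝ := fun ω => (C.indicator (fun _ => (1 : ℝ)) ω, VV a μ σ W s ω)
  let Z : Ω → ℝ := fun ω => W T ω - W s ω
  have hY : Measurable[F s] Y :=
    Measurable.prodMk ((measurable_const).indicator hC) (VV_meas hW a μ σ s)
  have hY' : Measurable Y := hY.mono (F.le s) le_rfl
  have hZ : Measurable Z := hWT.sub hWs
  have hind : IndepFun Y Z P :=
    (indep_of_indep_of_le_right (hW.incr_indep s T hs hsT.le) hY.comap_le).symm
  have hmap := (indepFun_iff_map_prod_eq_prod_map_map hY'.aemeasurable hZ.aemeasurable).1 hind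
  have hZlaw : Measure.map Z P = gaussianReal 0 (Real.toNNReal (T - s)) :=
    hW.incr_law s T hs hsT.le
  let Ψ : (ℝ × ℝ) × ℝ → ℝ := fun p =>
    p.1.1 * gg (2 * μ / σ ^ 2) (p.1.2 + μ * (T - s) + σ * p.2)
  have hΨ : Measurable Ψ := by
    refine Measurable.mul (by fun_prop) ((gg_measurable _).comp (by fun_prop))
  have e1 : ∀ ω, Ψ (Y ω, Z ω) = C.indicator (fun ω => gg (2 * μ / σ ^ 2) (VV a μ σ W T ω)) ω := by
    intro ω
    simp only [Ψ, Y, Z]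
    have : VV a μ σ W s ω + μ * (T - s) + σ * (W T ω - W s ω) = VV a μ σ W T ω := by
      simp only [VV]; ring
    rw [this]
    by_cases h : ω ∈ C <;> simp [h]
  have hint : Integrable Ψ ((P.map Y).prod (P.map Z)) := by
    rw [← hmap, integrable_map_measure hΨ.aestronglyMeasurable (hY'.prodMk hZ).aemeasurable]
    have : (Ψ ∘ fun ω => (Y ω, Z ω)) =
        C.indicator (fun ω => gg (2 * μ / σ ^ 2) (VV a μ σ W T ω)) := by
      ext ω; exact e1 ω
    rw [this]
    exact (VV_integrable hW a μ σ T _ (hs.trans hsT.le)).indicator hC'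
  rw [← integral_indicator hC', ← integral_indicator hC']
  calc ∫ ω, C.indicator (fun ω => gg (2 * μ / σ ^ 2) (VV a μ σ W T ω)) ω ∂P
      = ∫ ω, Ψ (Y ω, Z ω) ∂P := by simp_rw [e1]
    _ = ∫ p, Ψ p ∂((P.map Y).prod (P.map Z)) := by
        rw [← hmap, integral_map (hY'.prodMk hZ).aemeasurable hΨ.aestronglyMeasurable]
    _ = ∫ y, ∫ z, Ψ (y, z) ∂(P.map Z) ∂(P.map Y) := integral_prod _ hint
    _ = ∫ y : ℝ × ℝ, y.1 * hh μ σ (T - s) y.2 ∂(P.map Y) := by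
        congr 1
        ext y
        simp only [Ψ]
        rw [integral_const_mul, hZlaw, gg_step μ σ (T - s) y.2 hσ (by linarith)]
    _ = ∫ ω, (Y ω).1 * hh μ σ (T - s) (Y ω).2 ∂P := by
        rw [integral_map hY'.aemeasurable]
        exact (measurable_fst.mul ((hh_cont_snd μ σ (T - s)).measurable.comp
          measurable_snd)).aestronglyMeasurable
    _ = _ := by
        congr 1
        ext ω
        simp only [Y]
        by_cases h : ω ∈ C <;> simp [h]

end prob

/-- Grid points. -/
def grd (t T : ℝ) (n i : ℕ) : ℝ := t + (T - t) * (i / (n + 1))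

lemma grd_ge (t T : ℝ) (htT : t < T) (n i : ℕ) : t ≤ grd t T n i := by
  unfold grd
  have : 0 ≤ (T - t) * ((i : ℝ) / (n + 1)) := mul_nonneg (by linarith) (by positivity)
  linarith

lemma grd_lt (t T : ℝ) (htT : t < T) (n i : ℕ) (hi : i < n + 1) : grd t T n i < T := by
  unfold grd
  have h1 : (i : ℝ) / (n + 1) < 1 := by
    rw [div_lt_one (by positivity)]
    exact_mod_cast hi
  nlinarith

lemma grd_mono (t T : ℝ) (htT : t < T) (n i j : ℕ) (hij : i ≤ j) : grd t T n i ≤ grd t T n j := by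
  unfold grd
  have : (i : ℝ) ≤ j := by exact_mod_cast hij
  have h2 : 0 < T - t := by linarith
  gcongr

/-- points of the grid close below a given point -/
lemma grd_near (t T u η : ℝ) (hu : u ∈ Ico t T) (hη : 0 < η) :
    ∀ᶠ n : ℕ in atTop, ∃ i < n + 1, grd t T n i ≤ u ∧ u - η < grd t T n i := by
  have htT : 0 < T - t := by linarith [hu.1, hu.2]
  obtain ⟨N, hN⟩ := exists_nat_gt ((T - t) / η)
  filter_upwards [eventually_ge_atTop N] with n hn
  have hn' : (T - t) / η < (n : ℝ) + 1 := by
    have : (N : ℝ) ≤ n := by exact_mod_cast hn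
    linarith
  have hn0 : (0 : ℝ) < (n : ℝ) + 1 := by positivity
  have hz : 0 ≤ (u - t) / (T - t) * (n + 1) :=
    mul_nonneg (div_nonneg (by linarith [hu.1]) htT.le) hn0.le
  have h1 := Nat.floor_le hz
  have h2 := Nat.lt_floor_add_one ((u - t) / (T - t) * (n + 1))
  have h3 : (u - t) / (T - t) * (n + 1) < n + 1 := by
    have : (u - t) / (T - t) < 1 := by rw [div_lt_one htT]; linarith [hu.2]
    nlinarith
  have h4 : (T - t) < η * (n + 1) := by rwa [div_lt_iff₀' hη] at hn'
  have h5 : (u - t) / (T - t) * (n + 1) * (T - t) = (u - t) * (n + 1) := by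
    field_simp
  refine ⟨⌊(u - t) / (T - t) * (n + 1)⌋₊, ?_, ?_, ?_⟩
  · have := h1.trans_lt h3
    exact_mod_cast this
  · unfold grd
    rw [← mul_div_assoc, ← le_sub_iff_add_le', div_le_iff₀ hn0]
    nlinarith
  · unfold grd
    rw [← mul_div_assoc, ← sub_lt_iff_lt_add', lt_div_iff₀ hn0]
    nlinarith

lemma path_lemma (v : ℝ → ℝ) (hv : Continuous v) (t T : ℝ) (htT : t < T) (h0 : v t < 0)
    (hT : v T ≠ 0) (hE : ∃ u ∈ Icc t T, 0 < v u) :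
    ∃ ρ ∈ Ioo t T, v ρ = 0 ∧ ∀ δ > 0, ∀ᶠ n : ℕ in atTop, ∃ i < n + 1,
      (∀ j < i, v (grd t T n j) ≤ 0) ∧ 0 < v (grd t T n i) ∧ |grd t T n i - ρ| < δ := by
  set S : Set ℝ := {u | u ∈ Icc t T ∧ 0 < v u} with hS
  have hSne : S.Nonempty := by obtain ⟨u, hu, hu'⟩ := hE; exact ⟨u, hu, hu'⟩
  have hSb : BddBelow S := ⟨t, fun u hu => hu.1.1⟩
  set ρ := sInf S with hρ
  have hρt : t ≤ ρ := le_csInf hSne fun u hu => hu.1.1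
  have hρT : ρ ≤ T := by
    obtain ⟨u, hu⟩ := hSne
    exact (csInf_le hSb hu).trans hu.1.2
  have hge : 0 ≤ v ρ := by
    have hcl : ρ ∈ closure S := csInf_mem_closure hSne hSb
    have : closure S ⊆ {u | 0 ≤ v u} :=
      closure_minimal (fun u hu => hu.2.le) (isClosed_le continuous_const hv)
    exact this hcl
  have hρt' : t < ρ := by
    rcases hρt.lt_or_eq with h | h
    · exact h
    · rw [← h] at hge; linarith
  have hle : v ρ ≤ 0 := by
    have hcl : ρ ∈ closure (Ioo t ρ) := by rw [closure_Ioo hρt'.ne]; exact ⟨hρt, le_rfl⟩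
    have : closure (Ioo t ρ) ⊆ {u | v u ≤ 0} := by
      refine closure_minimal (fun u hu => ?_) (isClosed_le hv continuous_const)
      by_contra h
      have hu' : u ∈ S := ⟨⟨hu.1.le, hu.2.le.trans hρT⟩, not_le.1 h⟩
      exact absurd (csInf_le hSb hu') (not_le.2 hu.2)
    exact this hcl
  have hv0 : v ρ = 0 := le_antisymm hle hge
  have hρT' : ρ < T := by
    rcases hρT.lt_or_eq with h | h
    · exact h
    · rw [h] at hv0; exact absurd hv0 hT
  refine ⟨ρ, ⟨hρt', hρT'⟩, hv0, fun δ hδ => ?_⟩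
  obtain ⟨u, huS, hu⟩ := exists_lt_of_csInf_lt hSne
    (show sInf S < min (ρ + δ) T from lt_min (by linarith) hρT')
  have huT : u < T := hu.trans_le (min_le_right _ _)
  have huδ : u < ρ + δ := hu.trans_le (min_le_left _ _)
  obtain ⟨η, hη, hpos⟩ := Metric.eventually_nhds_iff.1
    ((hv.tendsto u).eventually (lt_mem_nhds huS.2))
  filter_upwards [grd_near t T u η ⟨huS.1.1, huT⟩ hη] with n ⟨i, hi, hi1, hi2⟩
  have hex : ∃ i, 0 < v (grd t T n i) := ⟨i, hpos (by
    rw [Real.dist_eq, abs_lt]; constructor <;> linarith)⟩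
  have hmin : Nat.find hex ≤ i := Nat.find_min' hex (hpos (by
    rw [Real.dist_eq, abs_lt]; constructor <;> linarith))
  refine ⟨Nat.find hex, hmin.trans_lt hi, fun j hj => not_lt.1 (Nat.find_min hex hj),
    Nat.find_spec hex, ?_⟩
  have h1 := grd_mono t T htT n _ _ hmin
  have h2 : ρ ≤ grd t T n (Nat.find hex) := csInf_le hSb
    ⟨⟨grd_ge t T htT _ _, by linarith⟩, Nat.find_spec hex⟩
  rw [abs_lt]; constructor <;> linarith

section core
variable {Ω : Type} [mΩ : MeasurableSpace Ω] {P : Measure Ω} [IsProbabilityMeasure P]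
    {F : Filtration ℝ mΩ} {W : ℝ → Ω → ℝ}

/-- First grid time with positive value is `i`, with overshoot at most one. -/
def GG {Ω : Type} (V : ℝ → Ω → ℝ) (t T : ℝ) (n i : ℕ) : Set Ω :=
  {ω | (∀ j < i, V (grd t T n j) ω ≤ 0) ∧ 0 < V (grd t T n i) ω ∧ V (grd t T n i) ω ≤ 1}

lemma GG_unique {Ω : Type} (V : ℝ → Ω → ℝ) (t T : ℝ) (n i j : ℕ) (ω : Ω)
    (hi : ω ∈ GG V t T n i) (hj : ω ∈ GG V t T n j) : i = j := by
  rcases lt_trichotomy i j with h | h | h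
  · exact absurd (hj.1 i h) (not_le.2 hi.2.1)
  · exact h
  · exact absurd (hi.1 j h) (not_le.2 hj.2.1)

lemma GG_sum_eq {Ω : Type} (V : ℝ → Ω → ℝ) (t T : ℝ) (n i : ℕ) (ω : Ω) (k : ℕ → Ω → ℝ)
    (hi : i < n + 1) (h : ω ∈ GG V t T n i) :
    ∑ j ∈ Finset.range (n + 1), (GG V t T n j).indicator (k j) ω = k i ω := by
  rw [Finset.sum_eq_single i]
  · exact indicator_of_mem h _
  · intro j _ hj
    exact indicator_of_notMem (fun h' => hj (GG_unique V t T n j i ω h' h)) _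
  · intro h'
    exact absurd (Finset.mem_range.2 hi) h'

lemma GG_sum_zero {Ω : Type} (V : ℝ → Ω → ℝ) (t T : ℝ) (n : ℕ) (ω : Ω) (k : ℕ → Ω → ℝ)
    (h : ∀ i < n + 1, ω ∉ GG V t T n i) :
    ∑ j ∈ Finset.range (n + 1), (GG V t T n j).indicator (k j) ω = 0 :=
  Finset.sum_eq_zero fun j hj => indicator_of_notMem (h j (Finset.mem_range.1 hj)) _

lemma GG_sum_bound {Ω : Type} (V : ℝ → Ω → ℝ) (t T : ℝ) (n : ℕ) (ω : Ω) (k : ℕ → Ω → ℝ) (B : ℝ)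
    (hB : 0 ≤ B) (hk : ∀ i, ω ∈ GG V t T n i → |k i ω| ≤ B) :
    ‖∑ j ∈ Finset.range (n + 1), (GG V t T n j).indicator (k j) ω‖ ≤ B := by
  by_cases h : ∀ i < n + 1, ω ∉ GG V t T n i
  · rw [GG_sum_zero V t T n ω k h]; simpa using hB
  · push Not at h
    obtain ⟨i, hi, hi'⟩ := h
    rw [GG_sum_eq V t T n i ω k hi hi', Real.norm_eq_abs]
    exact hk i hi'

lemma GG_meas (hW : IsStdBM P F W) (a μ σ t T : ℝ) (htT : t < T) (n i : ℕ) :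
    MeasurableSet[F (grd t T n i)] (GG (VV a μ σ W) t T n i) := by
  have hm : ∀ j ≤ i, Measurable[F (grd t T n i)] (VV a μ σ W (grd t T n j)) := fun j hj =>
    (VV_meas hW a μ σ _).mono (F.mono (grd_mono t T htT n j i hj)) le_rfl
  have : GG (VV a μ σ W) t T n i =
      (⋂ j ∈ Finset.range i, VV a μ σ W (grd t T n j) ⁻¹' Iic 0) ∩
        (VV a μ σ W (grd t T n i) ⁻¹' Ioc 0 1) := by
    ext ω
    simp [GG]
  rw [this]
  refine MeasurableSet.inter ?_ (hm i le_rfl measurableSet_Ioc)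
  exact Finset.measurableSet_biInter _ fun j hj =>
    hm j (Finset.mem_range.1 hj).le measurableSet_Iic

lemma hh_bound (μ σ τ y : ℝ) (h0 : 0 < y) (h1 : y ≤ 1) :
    |hh μ σ τ y| ≤ 1 + Real.exp |2 * μ / σ ^ 2| := by
  rw [abs_of_nonneg (hh_nonneg _ _ _ _)]
  refine (hh_le _ _ _ _).trans ?_
  gcongr
  calc -(2 * μ / σ ^ 2) * y ≤ |2 * μ / σ ^ 2| * y := by
        gcongr; exact neg_le_abs _
    _ ≤ |2 * μ / σ ^ 2| := mul_le_of_le_one_right (abs_nonneg _) h1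

lemma GG_event {Ω : Type} (V : ℝ → Ω → ℝ) (t T : ℝ) (htT : t < T) (ω : Ω)
    (hv : Continuous fun u => V u ω) (h0 : V t ω < 0) (hT : V T ω ≠ 0)
    (hE : ∃ u ∈ Icc t T, 0 < V u ω) :
    ∃ ρ ∈ Ioo t T, V ρ ω = 0 ∧ ∀ δ > 0, ∀ᶠ n : ℕ in atTop, ∃ i < n + 1,
      ω ∈ GG V t T n i ∧ |grd t T n i - ρ| < δ := by
  obtain ⟨ρ, hρ, hρ0, H⟩ := path_lemma (fun u => V u ω) hv t T htT h0 hT hE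
  refine ⟨ρ, hρ, hρ0, fun δ hδ => ?_⟩
  obtain ⟨η, hη, hη1⟩ := Metric.eventually_nhds_iff.1
    ((hv.tendsto ρ).eventually (gt_mem_nhds (show V ρ ω < 1 by rw [hρ0]; norm_num)))
  filter_upwards [H (min δ η) (lt_min hδ hη)] with n ⟨i, hi, hi1, hi2, hi3⟩
  exact ⟨i, hi, ⟨hi1, hi2, (hη1 (hi3.trans_le (min_le_right _ _))).le⟩,
    hi3.trans_le (min_le_left _ _)⟩

/-- exceedance event -/
def EE {Ω : Type} (V : ℝ → Ω → ℝ) (t T : ℝ) : Set Ω := {ω | ∃ u ∈ Icc t T, 0 < V u ω}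

lemma EE_meas (hW : IsStdBM P F W) (a μ σ t T : ℝ) (htT : t < T) :
    MeasurableSet (EE (VV a μ σ W) t T) := by
  have : EE (VV a μ σ W) t T = (⋃ n : ℕ, ⋃ i ∈ Finset.range (n + 1),
      VV a μ σ W (grd t T n i) ⁻¹' Ioi 0) ∪ VV a μ σ W T ⁻¹' Ioi 0 := by
    ext ω
    simp only [EE, mem_setOf_eq, mem_union, mem_iUnion, mem_preimage, mem_Ioi, Finset.mem_range]
    constructor
    · rintro ⟨u, hu, hpos⟩
      rcases hu.2.lt_or_eq with h | h
      · left
        obtain ⟨η, hη, hη1⟩ := Metric.eventually_nhds_iff.1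
          (((VV_cont hW a μ σ ω).tendsto u).eventually (lt_mem_nhds hpos))
        obtain ⟨n, i, hi, hi1, hi2⟩ := (grd_near t T u η ⟨hu.1, h⟩ hη).exists
        refine ⟨n, i, hi, hη1 ?_⟩
        rw [Real.dist_eq, abs_lt]; constructor <;> linarith
      · right; rwa [h] at hpos
    · rintro (⟨n, i, hi, h⟩ | h)
      · exact ⟨_, ⟨grd_ge t T htT _ _, (grd_lt t T htT _ _ hi).le⟩, h⟩
      · exact ⟨T, ⟨htT.le, le_rfl⟩, h⟩
  rw [this]
  refine MeasurableSet.union (MeasurableSet.iUnion fun n => Finset.measurableSet_biUnion _ fun i _ =>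
    VV_meas' hW a μ σ _ measurableSet_Ioi) (VV_meas' hW a μ σ _ measurableSet_Ioi)

lemma core (hW : IsStdBM P F W) (a μ σ t T : ℝ) (hσ : 0 < σ) (ht : 0 ≤ t) (htT : t < T)
    (C : Set Ω) (hC : MeasurableSet[F t] C) (hneg : ∀ ω ∈ C, VV a μ σ W t ω < 0) :
    ∫ ω in C, (EE (VV a μ σ W) t T).indicator (fun _ => (1 : ℝ)) ω ∂P =
      ∫ ω in C, hh μ σ (T - t) (VV a μ σ W t ω) ∂P := by
  have hC' : MeasurableSet C := F.le t _ hC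
  set V := VV a μ σ W with hV
  let g : Ω → ℝ := fun ω => gg (2 * μ / σ ^ 2) (V T ω)
  let k : ℕ → ℕ → Ω → ℝ := fun n i ω => hh μ σ (T - grd t T n i) (V (grd t T n i) ω)
  let B : ℝ := 1 + Real.exp |2 * μ / σ ^ 2|
  have hB : 0 ≤ B := by positivity
  have hg : Integrable g P := VV_integrable hW a μ σ T _ (ht.trans htT.le)
  have hGm : ∀ n i, MeasurableSet (GG V t T n i) := fun n i =>
    F.le _ _ (GG_meas hW a μ σ t T htT n i)
  have hkm : ∀ n i, Measurable (k n i) := fun n i =>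
    (hh_cont_snd μ σ _).measurable.comp (VV_meas' hW a μ σ _)
  have hki : ∀ n i, Integrable ((GG V t T n i).indicator (k n i)) P := by
    intro n i
    refine Integrable.of_bound ((hkm n i).indicator (hGm n i)).aestronglyMeasurable B
      (ae_of_all _ fun ω => ?_)
    by_cases h : ω ∈ GG V t T n i
    · rw [indicator_of_mem h, Real.norm_eq_abs]
      exact hh_bound _ _ _ _ h.2.1 h.2.2
    · rw [indicator_of_notMem h]; simpa using hB
  have heq : ∀ n : ℕ,
      ∫ ω in C, ∑ i ∈ Finset.range (n + 1), (GG V t T n i).indicator g ω ∂P =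
      ∫ ω in C, ∑ i ∈ Finset.range (n + 1), (GG V t T n i).indicator (k n i) ω ∂P := by
    intro n
    rw [integral_finset_sum _ fun i _ => (hg.indicator (hGm n i)).integrableOn,
      integral_finset_sum _ fun i _ => (hki n i).integrableOn]
    refine Finset.sum_congr rfl fun i hi => ?_
    rw [setIntegral_indicator (hGm n i), setIntegral_indicator (hGm n i)]
    refine VV_step hW a μ σ _ T hσ (ht.trans (grd_ge t T htT n i))
      (grd_lt t T htT n i (Finset.mem_range.1 hi)) _ ?_
    exact MeasurableSet.inter (F.mono (grd_ge t T htT n i) _ hC) (GG_meas hW a μ σ t T htT n i)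
  have hae : ∀ᵐ ω ∂(P.restrict C), ω ∈ C ∧ V T ω ≠ 0 :=
    (ae_restrict_mem hC').and (ae_restrict_of_ae (VV_ne_zero hW a μ σ T hσ (ht.trans_lt htT)))
  have lim1 : Tendsto (fun n : ℕ =>
      ∫ ω in C, ∑ i ∈ Finset.range (n + 1), (GG V t T n i).indicator g ω ∂P) atTop
      (nhds (∫ ω in C, g ω ∂P)) := by
    refine tendsto_integral_of_dominated_convergence g ?_ hg.integrableOn ?_ ?_
    · intro n
      exact (integrable_finset_sum _ fun i _ =>
        (hg.indicator (hGm n i)).integrableOn).aestronglyMeasurable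
    · intro n
      refine ae_of_all _ fun ω => ?_
      exact GG_sum_bound V t T n ω (fun _ => g) (g ω) (gg_nonneg _ _) fun i _ =>
        (abs_of_nonneg (gg_nonneg _ _)).le
    · filter_upwards [hae] with ω ⟨hωC, hωT⟩
      by_cases hE : ∃ u ∈ Icc t T, 0 < V u ω
      · obtain ⟨ρ, hρ, hρ0, H⟩ := GG_event V t T htT ω (VV_cont hW a μ σ ω) (hneg ω hωC) hωT hE
        refine tendsto_const_nhds.congr' ?_
        filter_upwards [H 1 one_pos] with n ⟨i, hi, hi1, _⟩
        exact (GG_sum_eq V t T n i ω (fun _ => g) hi hi1).symm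
      · have h0 : g ω = 0 := by
          push Not at hE
          have := hE T ⟨htT.le, le_rfl⟩
          simp only [g, gg]
          rw [if_neg (not_le.2 (lt_of_le_of_ne this hωT))]
        rw [h0]
        refine tendsto_const_nhds.congr fun n => ?_
        refine (GG_sum_zero V t T n ω (fun _ => g) fun i hi hi' => hE ?_).symm
        exact ⟨_, ⟨grd_ge t T htT n i, (grd_lt t T htT n i hi).le⟩, hi'.2.1⟩
  have lim2 : Tendsto (fun n : ℕ =>
      ∫ ω in C, ∑ i ∈ Finset.range (n + 1), (GG V t T n i).indicator (k n i) ω ∂P) atTop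
      (nhds (∫ ω in C, (EE V t T).indicator (fun _ => (1 : ℝ)) ω ∂P)) := by
    refine tendsto_integral_of_dominated_convergence (fun _ => B) ?_ (integrable_const _) ?_ ?_
    · intro n
      exact (integrable_finset_sum _ fun i _ => (hki n i).integrableOn).aestronglyMeasurable
    · intro n
      refine ae_of_all _ fun ω => ?_
      exact GG_sum_bound V t T n ω (k n) B hB fun i hi => hh_bound _ _ _ _ hi.2.1 hi.2.2
    · filter_upwards [hae] with ω ⟨hωC, hωT⟩
      by_cases hE : ∃ u ∈ Icc t T, 0 < V u ω
      · obtain ⟨ρ, hρ, hρ0, H⟩ := GG_event V t T htT ω (VV_cont hW a μ σ ω) (hneg ω hωC) hωT hE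
        rw [indicator_of_mem (show ω ∈ EE V t T from hE)]
        have hc : ContinuousAt (fun u => hh μ σ (T - u) (V u ω)) ρ := by
          have h1 : ContinuousAt (fun p : ℝ × ℝ => hh μ σ p.1 p.2) (T - ρ, V ρ ω) :=
            (hh_cont μ σ hσ).continuousAt
              ((isOpen_lt continuous_const continuous_fst).mem_nhds (by simpa using hρ.2))
          have h2 : ContinuousAt (fun u => (T - u, V u ω)) ρ :=
            ((continuous_const.sub continuous_id).prodMk (VV_cont hW a μ σ ω)).continuousAt
          exact ContinuousAt.comp (f := fun u => (T - u, V u ω)) h1 h2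
        rw [Metric.tendsto_nhds]
        intro ε hε
        obtain ⟨δ, hδ, hδ1⟩ := Metric.continuousAt_iff.1 hc ε hε
        filter_upwards [H δ hδ] with n ⟨i, hi, hi1, hi2⟩
        rw [GG_sum_eq V t T n i ω (k n) hi hi1]
        have := hδ1 (show dist (grd t T n i) ρ < δ from hi2)
        rwa [hρ0, hh_zero] at this
      · rw [indicator_of_notMem (show ω ∉ EE V t T from hE)]
        refine tendsto_const_nhds.congr fun n => ?_
        refine (GG_sum_zero V t T n ω (k n) fun i hi hi' => hE ?_).symm
        exact ⟨_, ⟨grd_ge t T htT n i, (grd_lt t T htT n i hi).le⟩, hi'.2.1⟩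
  have h3 := tendsto_nhds_unique (lim2.congr fun n => (heq n).symm) lim1
  rw [h3]
  exact VV_step hW a μ σ t T hσ ht htT C hC

end core

section final
variable {Ω : Type} [mΩ : MeasurableSpace Ω] {P : Measure Ω} [IsProbabilityMeasure P]
    {F : Filtration ℝ mΩ} {W : ℝ → Ω → ℝ}

/-- closed hitting event -/
def HH {Ω : Type} (V : ℝ → Ω → ℝ) (t T : ℝ) : Set Ω := {ω | ∃ u ∈ Icc t T, 0 ≤ V u ω}

/-- a positive sequence tending to zero -/
def eps (k : ℕ) : ℝ := 1 / ((k : ℝ) + 1)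

lemma eps_pos (k : ℕ) : 0 < eps k := by unfold eps; positivity

lemma eps_tendsto : Tendsto eps atTop (nhds 0) := tendsto_one_div_add_atTop_nhds_zero_nat

lemma VV_shift (a e μ σ : ℝ) (u : ℝ) (ω : Ω) :
    VV (a + e) μ σ W u ω = VV a μ σ W u ω + e := by unfold VV; ring

lemma EE_of_HH (a e μ σ t T : ℝ) (he : 0 < e) (ω : Ω) (h : ω ∈ HH (VV a μ σ W) t T) :
    ω ∈ EE (VV (a + e) μ σ W) t T := by
  obtain ⟨u, hu, h⟩ := h
  exact ⟨u, hu, by rw [VV_shift]; linarith⟩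

lemma not_EE_of_not_HH (hW : IsStdBM P F W) (a μ σ t T : ℝ) (htT : t < T) (ω : Ω)
    (h : ω ∉ HH (VV a μ σ W) t T) :
    ∀ᶠ k : ℕ in atTop, ω ∉ EE (VV (a + eps k) μ σ W) t T := by
  obtain ⟨m, hm, hmax⟩ := isCompact_Icc.exists_isMaxOn (nonempty_Icc.2 htT.le)
    (VV_cont hW a μ σ ω).continuousOn
  have hneg : VV a μ σ W m ω < 0 := not_le.1 fun h' => h ⟨m, hm, h'⟩
  filter_upwards [eps_tendsto.eventually (gt_mem_nhds (show 0 < -VV a μ σ W m ω by linarith))]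
    with k hk
  rintro ⟨u, hu, hu'⟩
  rw [VV_shift] at hu'
  have : VV a μ σ W u ω ≤ VV a μ σ W m ω := hmax hu
  linarith

lemma HH_meas (hW : IsStdBM P F W) (a μ σ t T : ℝ) (htT : t < T) :
    MeasurableSet (HH (VV a μ σ W) t T) := by
  have : HH (VV a μ σ W) t T = ⋂ k : ℕ, EE (VV (a + eps k) μ σ W) t T := by
    ext ω
    rw [mem_iInter]
    constructor
    · exact fun h k => EE_of_HH a _ μ σ t T (eps_pos k) ω h
    · intro h
      by_contra h'
      obtain ⟨k, hk⟩ := (not_EE_of_not_HH hW a μ σ t T htT ω h').exists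
      exact hk (h k)
  rw [this]
  exact MeasurableSet.iInter fun k => EE_meas hW _ μ σ t T htT

lemma core_closed (hW : IsStdBM P F W) (a μ σ t T : ℝ) (hσ : 0 < σ) (ht : 0 ≤ t) (htT : t < T)
    (C : Set Ω) (hC : MeasurableSet[F t] C) (hneg : ∀ ω ∈ C, VV a μ σ W t ω < 0) :
    ∫ ω in C, (HH (VV a μ σ W) t T).indicator (fun _ => (1 : ℝ)) ω ∂P =
      ∫ ω in C, hh μ σ (T - t) (VV a μ σ W t ω) ∂P := by
  have hC' : MeasurableSet C := F.le t _ hC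
  let D : ℕ → Set Ω := fun k => VV (a + eps k) μ σ W t ⁻¹' Iio 0
  have hD : ∀ k, MeasurableSet[F t] (D k) := fun k => VV_meas hW _ μ σ t measurableSet_Iio
  have hD' : ∀ k, MeasurableSet (D k) := fun k => F.le t _ (hD k)
  have heq : ∀ k,
      ∫ ω in C, (D k).indicator ((EE (VV (a + eps k) μ σ W) t T).indicator (fun _ => (1 : ℝ))) ω ∂P
      = ∫ ω in C, (D k).indicator
        (fun ω => hh μ σ (T - t) (VV (a + eps k) μ σ W t ω)) ω ∂P := by
    intro k
    rw [setIntegral_indicator (hD' k), setIntegral_indicator (hD' k)]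
    exact core hW _ μ σ t T hσ ht htT _ (MeasurableSet.inter hC (hD k)) fun ω hω => hω.2
  have hDev : ∀ ω ∈ C, ∀ᶠ k in atTop, ω ∈ D k := by
    intro ω hω
    filter_upwards [eps_tendsto.eventually
      (gt_mem_nhds (show 0 < -VV a μ σ W t ω by linarith [hneg ω hω]))] with k hk
    simp only [D, mem_preimage, mem_Iio, VV_shift]
    linarith
  have lim1 : Tendsto (fun k => ∫ ω in C,
      (D k).indicator ((EE (VV (a + eps k) μ σ W) t T).indicator (fun _ => (1 : ℝ))) ω ∂P) atTop
      (nhds (∫ ω in C, (HH (VV a μ σ W) t T).indicator (fun _ => (1 : ℝ)) ω ∂P)) := by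
    refine tendsto_integral_of_dominated_convergence (fun _ => 1) ?_ (integrable_const _) ?_ ?_
    · intro k
      exact ((measurable_const.indicator (EE_meas hW _ μ σ t T htT)).indicator
        (hD' k)).aestronglyMeasurable
    · intro k
      refine ae_of_all _ fun ω => ?_
      simp only [indicator]
      split_ifs <;> simp
    · filter_upwards [ae_restrict_mem hC'] with ω hω
      refine tendsto_const_nhds.congr' ?_
      by_cases h : ω ∈ HH (VV a μ σ W) t T
      · filter_upwards [hDev ω hω] with k hk
        rw [indicator_of_mem h, indicator_of_mem hk,
          indicator_of_mem (EE_of_HH a _ μ σ t T (eps_pos k) ω h)]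
      · filter_upwards [hDev ω hω, not_EE_of_not_HH hW a μ σ t T htT ω h] with k hk hk'
        rw [indicator_of_notMem h, indicator_of_mem hk, indicator_of_notMem hk']
  have lim2 : Tendsto (fun k => ∫ ω in C, (D k).indicator
        (fun ω => hh μ σ (T - t) (VV (a + eps k) μ σ W t ω)) ω ∂P) atTop
      (nhds (∫ ω in C, hh μ σ (T - t) (VV a μ σ W t ω) ∂P)) := by
    refine tendsto_integral_of_dominated_convergence (fun _ => 1) ?_ (integrable_const _) ?_ ?_
    · intro k
      exact (((hh_cont_snd μ σ (T - t)).measurable.comp (VV_meas' hW _ μ σ t)).indicator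
        (hD' k)).aestronglyMeasurable
    · intro k
      refine ae_of_all _ fun ω => ?_
      by_cases h : ω ∈ D k
      · rw [indicator_of_mem h, Real.norm_of_nonneg (hh_nonneg _ _ _ _)]
        exact hh_le_one μ σ (T - t) _ hσ (by linarith) (le_of_lt h)
      · rw [indicator_of_notMem h]; simp
    · filter_upwards [ae_restrict_mem hC'] with ω hω
      have h1 : Tendsto (fun k => hh μ σ (T - t) (VV (a + eps k) μ σ W t ω)) atTop
          (nhds (hh μ σ (T - t) (VV a μ σ W t ω))) := by
        refine ((hh_cont_snd μ σ (T - t)).tendsto _).comp ?_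
        simp_rw [VV_shift]
        simpa using tendsto_const_nhds.add eps_tendsto
      refine h1.congr' ?_
      filter_upwards [hDev ω hω] with k hk
      rw [indicator_of_mem hk]
  exact tendsto_nhds_unique lim1 (lim2.congr fun k => (heq k).symm)

lemma touch (hW : IsStdBM P F W) (a μ σ t T : ℝ) (hσ : 0 < σ) (ht : 0 ≤ t) (htT : t < T) :
    ∀ᵐ ω ∂P, VV a μ σ W t ω = 0 → ∃ u ∈ Ioc t T, 0 ≤ VV a μ σ W u ω := by
  let D : Set Ω := VV a μ σ W t ⁻¹' {0}
  have hD : MeasurableSet[F t] D := VV_meas hW _ μ σ t (measurableSet_singleton _)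
  have hD' : MeasurableSet D := F.le t _ hD
  have key : ∀ k : ℕ, P.real (D \ EE (VV (a + -eps k) μ σ W) t T) =
      P.real D * (1 - hh μ σ (T - t) (-eps k)) := by
    intro k
    have hEm := EE_meas hW (a + -eps k) μ σ t T htT
    have h := core hW (a + -eps k) μ σ t T hσ ht htT D hD (fun ω hω => by
      have h0 : VV a μ σ W t ω = 0 := hω
      rw [VV_shift, h0]
      linarith [eps_pos k])
    rw [setIntegral_indicator hEm, setIntegral_const, smul_eq_mul, mul_one] at h
    have h2 : ∫ ω in D, hh μ σ (T - t) (VV (a + -eps k) μ σ W t ω) ∂P =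
        ∫ ω in D, hh μ σ (T - t) (-eps k) ∂P := by
      refine setIntegral_congr_fun hD' fun ω hω => ?_
      have h0 : VV a μ σ W t ω = 0 := hω
      simp only [VV_shift, h0, zero_add]
    rw [h2, setIntegral_const, smul_eq_mul] at h
    have h3 := measureReal_inter_add_diff (μ := P) (s := D) hEm
    linarith
  have hlim : Tendsto (fun k : ℕ => P.real D * (1 - hh μ σ (T - t) (-eps k))) atTop (nhds 0) := by
    have h1 : Tendsto (fun k : ℕ => hh μ σ (T - t) (-eps k)) atTop (nhds 1) := by
      rw [← hh_zero μ σ (T - t)]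
      refine ((hh_cont_snd μ σ (T - t)).tendsto _).comp ?_
      simpa using eps_tendsto.neg
    simpa using (tendsto_const_nhds (x := (1 : ℝ)).sub h1).const_mul (P.real D)
  set N : Set Ω := {ω | ¬ (VV a μ σ W t ω = 0 → ∃ u ∈ Ioc t T, 0 ≤ VV a μ σ W u ω)} with hN
  have hsub : ∀ k, N ⊆ D \ EE (VV (a + -eps k) μ σ W) t T := by
    intro k ω hω
    have hω' : ¬ (VV a μ σ W t ω = 0 → ∃ u ∈ Ioc t T, 0 ≤ VV a μ σ W u ω) := hω
    push Not at hω'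
    refine ⟨hω'.1, ?_⟩
    rintro ⟨u, hu, hpos⟩
    rw [VV_shift] at hpos
    have he := eps_pos k
    rcases hu.1.lt_or_eq with h | h
    · have := hω'.2 u ⟨h, hu.2⟩
      linarith
    · rw [← h, hω'.1] at hpos
      linarith
  have hle : P.real N ≤ 0 := ge_of_tendsto' hlim fun k => by
    rw [← key k]
    exact measureReal_mono (hsub k)
  rw [ae_iff]
  have h0 : P.real N = 0 := le_antisymm hle measureReal_nonneg
  exact (measureReal_eq_zero_iff (by finiteness)).1 h0

lemma condExp_HH (hW : IsStdBM P F W) (a μ σ t T : ℝ) (hσ : 0 < σ) (ht : 0 ≤ t) (htT : t < T) :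
    P[(HH (VV a μ σ W) t T).indicator (fun _ => (1 : ℝ)) | F t] =ᵐ[P]
      fun ω => min (hh μ σ (T - t) (VV a μ σ W t ω)) 1 := by
  have hHm := HH_meas hW a μ σ t T htT
  have hhm : Measurable[F t] (fun ω => min (hh μ σ (T - t) (VV a μ σ W t ω)) 1) :=
    (((hh_cont_snd μ σ (T - t)).min continuous_const).measurable).comp (VV_meas hW a μ σ t)
  have hint : Integrable (fun ω => min (hh μ σ (T - t) (VV a μ σ W t ω)) 1) P := by
    refine Integrable.of_bound (hhm.mono (F.le t) le_rfl).aestronglyMeasurable 1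
      (ae_of_all _ fun ω => ?_)
    rw [Real.norm_of_nonneg (le_min (hh_nonneg _ _ _ _) zero_le_one)]
    exact min_le_right _ _
  have hint2 : Integrable ((HH (VV a μ σ W) t T).indicator (fun _ => (1 : ℝ))) P :=
    (integrable_const _).indicator hHm
  refine (ae_eq_condExp_of_forall_setIntegral_eq (F.le t) hint2 (fun s _ _ => hint.integrableOn)
    ?_ hhm.stronglyMeasurable.aestronglyMeasurable).symm
  intro C hC _
  have hC' : MeasurableSet C := F.le t _ hC
  let D : Set Ω := VV a μ σ W t ⁻¹' Iio 0
  have hD : MeasurableSet[F t] D := VV_meas hW _ μ σ t measurableSet_Iio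
  have hD' : MeasurableSet D := F.le t _ hD
  rw [← integral_inter_add_diff hD' hint.integrableOn,
    ← integral_inter_add_diff hD' hint2.integrableOn]
  congr 1
  · rw [core_closed hW a μ σ t T hσ ht htT _ (MeasurableSet.inter hC hD) fun ω hω => hω.2]
    refine setIntegral_congr_fun (hC'.inter hD') fun ω hω => ?_
    exact min_eq_left (hh_le_one μ σ (T - t) _ hσ (by linarith) (le_of_lt hω.2))
  · refine setIntegral_congr_fun (hC'.diff hD') fun ω hω => ?_
    have h0 : 0 ≤ VV a μ σ W t ω := not_lt.1 hω.2
    have h1 : ω ∈ HH (VV a μ σ W) t T := ⟨t, ⟨le_rfl, htT.le⟩, h0⟩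
    simp only [indicator_of_mem h1]
    exact min_eq_right (hh_ge_one μ σ (T - t) _ hσ (by linarith) h0)

lemma GBM_eq (r σ L x : ℝ) (hL : 0 < L) (hx : 0 < x) (u : ℝ) (ω : Ω) :
    GBM r σ x W u ω = L * Real.exp (VV (Real.log (x / L)) (r - σ ^ 2 / 2) σ W u ω) := by
  unfold GBM VV
  rw [add_assoc, Real.exp_add (Real.log (x / L)), Real.exp_log (by positivity)]
  field_simp

lemma GBM_le_iff (r σ L x : ℝ) (hL : 0 < L) (hx : 0 < x) (u : ℝ) (ω : Ω) :
    L ≤ GBM r σ x W u ω ↔ 0 ≤ VV (Real.log (x / L)) (r - σ ^ 2 / 2) σ W u ω := by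
  rw [GBM_eq r σ L x hL hx, le_mul_iff_one_le_right hL, Real.one_le_exp_iff]

lemma Zt_eq (r σ L T t y : ℝ) (hL : 0 < L) (hσ : 0 < σ) (htT : t < T) :
    Zt r σ L T t (L * Real.exp y) = min (hh (r - σ ^ 2 / 2) σ (T - t) y) 1 := by
  unfold Zt hh
  rw [if_pos htT]
  have h1 : L / (L * Real.exp y) = Real.exp (-y) := by
    rw [Real.exp_neg]
    field_simp
  rw [h1, Real.log_exp, neg_neg, ← Real.exp_mul]
  congr 4
  field_simp

end final
/-- For every `t ∈ [0, T)` and every `x > 0`, almost surely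
`P(max_{t ≤ u ≤ T} X^x_u ≥ L | F_t) = Z(t, X^x_t)`; in particular the Azéma
supermartingale of the last exit time `θ = sup{t ∈ [0,T] : X^x_t ≥ L}` equals
`Z(t, X^x_t)`. -/
theorem stmt_6 {Ω : Type} [mΩ : MeasurableSpace Ω] (P : Measure Ω) [IsProbabilityMeasure P]
    (F : Filtration ℝ mΩ) (W : ℝ → Ω → ℝ) (hW : IsStdBM P F W)
    (r σ L K T : ℝ) (hr : 0 < r) (hσ : 0 < σ) (hL : 0 < L) (hLK : L < K) (hT : 0 < T)
    (t : ℝ) (ht : t ∈ Ico (0 : ℝ) T) (x : ℝ) (hx : 0 < x) :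
    (P[Set.indicator {ω | L ≤ ⨆ u : Icc t T, GBM r σ x W u ω} (fun _ => (1 : ℝ)) | F t]
        =ᵐ[P] fun ω => Zt r σ L T t (GBM r σ x W t ω)) ∧
    (P[Set.indicator {ω | t < sSup {s : ℝ | s ∈ Icc (0 : ℝ) T ∧ L ≤ GBM r σ x W s ω}}
          (fun _ => (1 : ℝ)) | F t]
        =ᵐ[P] fun ω => Zt r σ L T t (GBM r σ x W t ω)) := by
  obtain ⟨ht0, htT⟩ := ht
  set a := Real.log (x / L) with ha
  set μ := r - σ ^ 2 / 2 with hμ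
  have hiff : ∀ u ω, L ≤ GBM r σ x W u ω ↔ 0 ≤ VV a μ σ W u ω := fun u ω =>
    GBM_le_iff r σ L x hL hx u ω
  have hZ : (fun ω => Zt r σ L T t (GBM r σ x W t ω)) =
      fun ω => min (hh μ σ (T - t) (VV a μ σ W t ω)) 1 := by
    ext ω
    rw [GBM_eq r σ L x hL hx, Zt_eq r σ L T t _ hL hσ htT]
  have hgc : ∀ ω, Continuous fun u => GBM r σ x W u ω := by
    intro ω
    have := hW.cont ω
    unfold GBM
    fun_prop
  have e1 : {ω | L ≤ ⨆ u : Icc t T, GBM r σ x W u ω} = HH (VV a μ σ W) t T := by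
    ext ω
    obtain ⟨m, hm, hmax⟩ := isCompact_Icc.exists_isMaxOn (nonempty_Icc.2 htT.le)
      (hgc ω).continuousOn
    have hne : Nonempty (Icc t T) := ⟨⟨m, hm⟩⟩
    have hb : BddAbove (range fun u : Icc t T => GBM r σ x W u ω) :=
      ⟨GBM r σ x W m ω, by rintro _ ⟨u, rfl⟩; exact hmax u.2⟩
    constructor
    · intro h
      have h' : L ≤ ⨆ u : Icc t T, GBM r σ x W u ω := h
      exact ⟨m, hm, (hiff m ω).1 (h'.trans (ciSup_le fun u => hmax u.2))⟩
    · rintro ⟨u, hu, h⟩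
      exact ((hiff u ω).2 h).trans (le_ciSup hb ⟨u, hu⟩)
  have e2 : ∀ ω, t < sSup {s : ℝ | s ∈ Icc (0 : ℝ) T ∧ L ≤ GBM r σ x W s ω} ↔
      ∃ u ∈ Ioc t T, 0 ≤ VV a μ σ W u ω := by
    intro ω
    constructor
    · intro h
      rcases Set.eq_empty_or_nonempty {s : ℝ | s ∈ Icc (0 : ℝ) T ∧ L ≤ GBM r σ x W s ω} with h0 | h0
      · rw [h0, Real.sSup_empty] at h
        linarith
      · obtain ⟨u, hu, htu⟩ := exists_lt_of_lt_csSup h0 h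
        exact ⟨u, ⟨htu, hu.1.2⟩, (hiff u ω).1 hu.2⟩
    · rintro ⟨u, hu, h⟩
      refine hu.1.trans_le (le_csSup ⟨T, fun s hs => hs.1.2⟩ ?_)
      exact ⟨⟨ht0.trans hu.1.le, hu.2⟩, (hiff u ω).2 h⟩
  have main := condExp_HH hW a μ σ t T hσ ht0 htT
  rw [hZ]
  refine ⟨by rw [e1]; exact main, ?_⟩
  refine (condExp_congr_ae ?_).trans main
  filter_upwards [touch hW a μ σ t T hσ ht0 htT] with ω hω
  have e3 : ω ∈ {ω | t < sSup {s : ℝ | s ∈ Icc (0 : ℝ) T ∧ L ≤ GBM r σ x W s ω}} ↔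
      ω ∈ HH (VV a μ σ W) t T := by
    refine (e2 ω).trans ⟨fun ⟨u, hu, h⟩ => ⟨u, ⟨hu.1.le, hu.2⟩, h⟩, fun ⟨u, hu, h⟩ => ?_⟩
    rcases hu.1.lt_or_eq with h1 | h1
    · exact ⟨u, ⟨h1, hu.2⟩, h⟩
    · rw [← h1] at h
      rcases h.lt_or_eq with h2 | h2
      · obtain ⟨η, hη, hη1⟩ := Metric.eventually_nhds_iff.1
          (((VV_cont hW a μ σ ω).tendsto t).eventually (lt_mem_nhds h2))
        have hm : 0 < min (η / 2) (T - t) := lt_min (by linarith) (by linarith)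
        refine ⟨t + min (η / 2) (T - t), ⟨by linarith, ?_⟩, (hη1 ?_).le⟩
        · linarith [min_le_right (η / 2) (T - t)]
        · rw [Real.dist_eq, add_sub_cancel_left, abs_of_pos hm]
          linarith [min_le_left (η / 2) (T - t)]
      · exact hω h2.symm
  by_cases h : ω ∈ HH (VV a μ σ W) t T
  · rw [indicator_of_mem h, indicator_of_mem (e3.2 h)]
  · rw [indicator_of_notMem h, indicator_of_notMem (fun h' => h (e3.1 h'))]

end
end
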